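/- Let a₁, a₂, a₃, a₄ ∈ ℕ be distinct, and let V ⊆ ℚ⁴ be the ℚ-linear span of the vectors (a₁^i, a₂^i, a₃^i, a₄^i) for i = 0, 1, 2, with the convention 0⁰ = 1. Suppose there exist C > 0 and a real number ℓ ≥ 4 such that for every ergodic measure preserving system (X, ℬ, μ, T) and every A ∈ ℬ with μ(A) > 0, there exists a finite-rank Bohr₀ set S ⊆ ℕ with limsup_{N−M→∞} (1/|S ∩ [M,N)|) Σ_{n ∈ S ∩ [M,N)} μ(T^{−a₁n}A ∩ T^{−a₂n}A ∩ T^{−a₃n}A ∩ T^{−a₄n}A) ≥ C μ(A)^ℓ. Then there exists a constant β > 0, depending only on a₁, a₂, a₃, a₄ and ℓ, such that for every m ∈ ℕ there is N₀ with: for every N ≥ N₀ and every E ⊆ [N]^m one has D_{m,N}(V^m, E) ≥ C β^m d_{m,N}(E)^ℓ. -/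

import Mathlib

open MeasureTheory

/-- A finite-rank Bohr₀ set: `{n : ℕ | ‖nα‖ < δ}` for some `α` in a finite-dimensional torus. -/
def IsFiniteRankBohr0 (S : Set ℕ) : Prop :=
  ∃ (r : ℕ) (α : Fin r → AddCircle (1 : ℝ)) (δ : ℝ), 0 < δ ∧
    S = {n : ℕ | ∀ j, ‖n • α j‖ < δ}

/-- `q : Fin d → Fin m → ℕ` satisfies the condition `V^m`: for every coordinate `j`,
the vector `(q 0 j, …, q (d-1) j)` lies in `V`. -/
def inVm {d m : ℕ} (V : Submodule ℚ (Fin d → ℚ)) (q : Fin d → Fin m → ℕ) : Prop :=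
  ∀ j : Fin m, (fun i : Fin d => ((q i j : ℕ) : ℚ)) ∈ V

/-- The density `d_{m,N}(E) = |E| / N^m`. -/
noncomputable def dmn (m N : ℕ) (E : Set (Fin m → ℕ)) : ℝ :=
  (E.ncard : ℝ) / (N : ℝ) ^ m

/-- The density `D_{m,N}(V^m, E)` of solutions of the linear system determined by `V`
with entries in `E`, among all solutions with entries in `[N]^m`. -/
noncomputable def Dmn {d : ℕ} (V : Submodule ℚ (Fin d → ℚ)) (m N : ℕ)
    (E : Set (Fin m → ℕ)) : ℝ :=
  (Set.ncard {q : Fin d → Fin m → ℕ | (∀ i, q i ∈ E) ∧ inVm V q} : ℝ) /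
    (Set.ncard {q : Fin d → Fin m → ℕ | (∀ i j, q i j < N) ∧ inVm V q} : ℝ)

/-- A set of natural numbers below `l` whose distinct elements are at least `Q` apart. -/
theorem Finset.card_le_div_add_one_of_separated {B : Finset ℕ} {l Q : ℕ} (hQ : 0 < Q)
    (hl : ∀ n ∈ B, n < l) (hsep : ∀ n ∈ B, ∀ n' ∈ B, n < n' → Q ≤ n' - n) :
    B.card ≤ l / Q + 1 := by
  have h : B.card ≤ (Finset.range (l / Q + 1)).card := by
    refine Finset.card_le_card_of_injOn (fun n => n / Q) ?_ ?_
    · intro n hn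
      simpa using Nat.lt_succ_of_le (Nat.div_le_div_right (hl n hn).le)
    · intro n hn n' hn' hnn
      by_contra hne
      have key : ∀ p ∈ B, ∀ p' ∈ B, p < p' → p / Q ≠ p' / Q := by
        intro p hp p' hp' hlt heq
        have h1 := hsep p hp p' hp' hlt
        have h2 : p + Q ≤ p' := by omega
        have h3 := Nat.div_le_div_right (c := Q) h2
        rw [Nat.add_div_right _ hQ] at h3
        omega
      rcases lt_or_gt_of_ne hne with hlt | hlt
      · exact key n hn n' hn' hlt hnn
      · exact key n' hn' n hn hlt hnn.symm
  simpa using h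

theorem exists_pos_lt_norm_nsmul (θ : UnitAddCircle) (Q : ℕ) :
    ∃ κ : ℝ, 0 < κ ∧ ∀ h < Q, h • θ ≠ 0 → κ < ‖h • θ‖ := by
  induction Q with
  | zero => exact ⟨1, one_pos, by simp⟩
  | succ Q ih =>
    obtain ⟨κ, hκ, H⟩ := ih
    by_cases h0 : Q • θ = 0
    · refine ⟨κ, hκ, fun h hh hne => ?_⟩
      rcases Nat.lt_succ_iff_lt_or_eq.1 hh with h1 | rfl
      · exact H h h1 hne
      · exact absurd h0 hne
    · have hpos : 0 < ‖Q • θ‖ := norm_pos_iff.2 h0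
      refine ⟨min κ (‖Q • θ‖ / 2), by positivity, fun h hh hne => ?_⟩
      rcases Nat.lt_succ_iff_lt_or_eq.1 hh with h1 | rfl
      · exact (min_le_left _ _).trans_lt (H h h1 hne)
      · exact (min_le_right _ _).trans_lt (by linarith)

theorem UnitAddCircle.norm_sub_or_norm_add_le {x : UnitAddCircle} {δ κ : ℝ}
    (h : |‖x‖ - δ| ≤ κ) : ‖x - (δ : UnitAddCircle)‖ ≤ κ ∨ ‖x + (δ : UnitAddCircle)‖ ≤ κ := by
  obtain ⟨t, rfl⟩ := QuotientAddGroup.mk_surjective x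
  obtain ⟨s, hs⟩ : ∃ s : ℝ, (s : UnitAddCircle) = (t : UnitAddCircle) ∧
      ‖(t : UnitAddCircle)‖ = |s| := by
    refine ⟨t - round t, ?_, UnitAddCircle.norm_eq⟩
    have : ((round t : ℝ) : UnitAddCircle) = 0 := by
      have := AddCircle.coe_period (1 : ℝ)
      rw [AddCircle.coe_eq_zero_iff]
      exact ⟨round t, by simp⟩
    rw [AddCircle.coe_sub, this, sub_zero]
  have hle : ∀ r : ℝ, ‖(r : UnitAddCircle)‖ ≤ |r| := fun r => by
    rw [UnitAddCircle.norm_eq]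
    simpa using round_le r 0
  change |‖(t : UnitAddCircle)‖ - δ| ≤ κ at h
  rw [hs.2] at h
  change ‖(t : UnitAddCircle) - _‖ ≤ κ ∨ ‖(t : UnitAddCircle) + _‖ ≤ κ
  rw [← hs.1, ← AddCircle.coe_sub, ← AddCircle.coe_add]
  rcases abs_cases s with ⟨h1, -⟩ | ⟨h1, -⟩
  · left
    rw [h1] at h
    exact (hle _).trans h
  · right
    rw [h1] at h
    refine (hle _).trans ?_
    rwa [← abs_neg, neg_add']

theorem exists_boundary_bound (θ : UnitAddCircle) (δ ε : ℝ) (hε : 0 < ε) :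
    ∃ κ : ℝ, 0 < κ ∧ ∃ l₀ : ℕ, ∀ h : ℕ, ‖h • θ‖ < κ → ∀ M l : ℕ, l₀ ≤ l →
      (((Finset.range l).filter fun n =>
        ¬ (‖(M + n) • θ‖ < δ ↔ ‖(M + n + h) • θ‖ < δ)).card : ℝ) ≤ ε * l := by
  by_cases hfin : ∃ m : ℕ, 0 < m ∧ m • θ = 0
  · obtain ⟨m, hm, hmθ⟩ := hfin
    obtain ⟨κ, hκ, H⟩ := exists_pos_lt_norm_nsmul θ m
    refine ⟨κ, hκ, 0, fun h hh M l _ => ?_⟩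
    have h0 : h • θ = 0 := by
      have hmod : h • θ = (h % m) • θ := by
        conv_lhs => rw [← Nat.mod_add_div h m, add_smul, mul_comm, mul_smul, hmθ, smul_zero,
          add_zero]
      by_contra hne
      rw [hmod] at hne hh
      exact absurd (H _ (Nat.mod_lt _ hm) hne) (not_lt.2 hh.le)
    have hempty : ((Finset.range l).filter fun n =>
        ¬ (‖(M + n) • θ‖ < δ ↔ ‖(M + n + h) • θ‖ < δ)) = ∅ := by
      refine Finset.filter_eq_empty_iff.2 fun n _ => ?_
      rw [not_not, add_smul (M + n) h, h0, add_zero]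
    rw [hempty]
    simp only [Finset.card_empty, Nat.cast_zero]
    positivity
  · push Not at hfin
    obtain ⟨Q, hQ⟩ := exists_nat_gt (4 / ε)
    have hQ0 : (0 : ℝ) < Q := lt_trans (by positivity) hQ
    have hQn : 0 < Q := by exact_mod_cast hQ0
    obtain ⟨κ, hκ, H⟩ := exists_pos_lt_norm_nsmul θ Q
    refine ⟨κ / 2, by positivity, Q, fun h hh M l hl => ?_⟩
    have hcard : ∀ c : UnitAddCircle,
        ((Finset.range l).filter fun n => ‖(M + n) • θ - c‖ ≤ κ / 2).card ≤ l / Q + 1 := by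
      intro c
      refine Finset.card_le_div_add_one_of_separated hQn ?_ ?_
      · intro n hn
        simpa using (Finset.mem_filter.1 hn).1
      · intro n hn n' hn' hlt
        by_contra hcon
        have h1 := (Finset.mem_filter.1 hn).2
        have h2 := (Finset.mem_filter.1 hn').2
        have h3 := H (n' - n) (by omega) (hfin _ (by omega))
        have h4 : (n' - n) • θ = ((M + n') • θ - c) - ((M + n) • θ - c) := by
          have : M + n' = (n' - n) + (M + n) := by omega
          rw [this, add_smul (n' - n)]
          abel
        rw [h4] at h3
        have := norm_sub_le ((M + n') • θ - c) ((M + n) • θ - c)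
        linarith
    have hsub : ((Finset.range l).filter fun n =>
        ¬ (‖(M + n) • θ‖ < δ ↔ ‖(M + n + h) • θ‖ < δ)) ⊆
        ((Finset.range l).filter fun n => ‖(M + n) • θ - (δ : UnitAddCircle)‖ ≤ κ / 2) ∪
        ((Finset.range l).filter fun n => ‖(M + n) • θ - -(δ : UnitAddCircle)‖ ≤ κ / 2) := by
      intro n hn
      rw [Finset.mem_filter] at hn
      have h1 : |‖(M + n) • θ‖ - ‖(M + n + h) • θ‖| ≤ κ / 2 := by
        refine (abs_norm_sub_norm_le _ _).trans ?_
        rw [add_smul (M + n) h, sub_add_cancel_left, norm_neg]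
        exact hh.le
      have h2 : |‖(M + n) • θ‖ - δ| ≤ κ / 2 := by
        rw [abs_le] at h1 ⊢
        by_cases h3 : ‖(M + n) • θ‖ < δ
        · have : ¬ ‖(M + n + h) • θ‖ < δ := fun h4 => hn.2 (by tauto)
          constructor <;> linarith
        · have : ‖(M + n + h) • θ‖ < δ := by
            by_contra h4
            exact hn.2 (by tauto)
          constructor <;> linarith
      rw [Finset.mem_union, Finset.mem_filter, Finset.mem_filter, sub_neg_eq_add]
      exact (UnitAddCircle.norm_sub_or_norm_add_le h2).imp (⟨hn.1, ·⟩) (⟨hn.1, ·⟩)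
    have hc := (Finset.card_le_card hsub).trans ((Finset.card_union_le _ _).trans
      (add_le_add (hcard _) (hcard _)))
    have hc' : (((Finset.range l).filter fun n =>
        ¬ (‖(M + n) • θ‖ < δ ↔ ‖(M + n + h) • θ‖ < δ)).card : ℝ) ≤
        (l / Q + 1) + (l / Q + 1) := by
      have h1 : ((l / Q : ℕ) : ℝ) ≤ l / Q := Nat.cast_div_le
      have h2 : (((Finset.range l).filter fun n =>
        ¬ (‖(M + n) • θ‖ < δ ↔ ‖(M + n + h) • θ‖ < δ)).card : ℝ) ≤
          ((l / Q + 1 + (l / Q + 1) : ℕ) : ℝ) := Nat.cast_le.2 hc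
      push_cast at h2
      linarith
    have h1 : (1 : ℝ) ≤ l / Q := by
      rw [le_div_iff₀ hQ0, one_mul]
      exact_mod_cast hl
    have h2 : 4 * ((l : ℝ) / Q) ≤ ε * l := by
      rw [← mul_div_assoc, div_le_iff₀ hQ0]
      rw [div_lt_iff₀ hε] at hQ
      nlinarith [Nat.cast_nonneg (α := ℝ) l]
    linarith

theorem IsFiniteRankBohr0.boundary {r : ℕ} (θ : Fin r → UnitAddCircle) (δ ε : ℝ) (hε : 0 < ε) :
    ∃ κ : ℝ, 0 < κ ∧ ∃ l₀ : ℕ, ∀ h : ℕ, (∀ j, ‖h • θ j‖ < κ) → ∀ M l : ℕ, l₀ ≤ l →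
      (((Finset.range l).filter fun n =>
        ¬ ((∀ j, ‖(M + n) • θ j‖ < δ) ↔ ∀ j, ‖(M + n + h) • θ j‖ < δ)).card : ℝ) ≤ ε * l := by
  rcases Nat.eq_zero_or_pos r with rfl | hr
  · refine ⟨1, one_pos, 0, fun h _ M l _ => ?_⟩
    simp only [IsEmpty.forall_iff, not_true_eq_false, Finset.filter_false, Finset.card_empty,
      Nat.cast_zero]
    positivity
  have hr' : (0 : ℝ) < r := by exact_mod_cast hr
  choose κ hκ l₀ H using fun j => exists_boundary_bound (θ j) δ (ε / r) (by positivity)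
  have hne : (Finset.univ : Finset (Fin r)).Nonempty := ⟨⟨0, hr⟩, Finset.mem_univ _⟩
  refine ⟨Finset.univ.inf' hne κ, (Finset.lt_inf'_iff _).2 fun j _ => hκ j,
    Finset.univ.sup l₀, fun h hh M l hl => ?_⟩
  have hsub : ((Finset.range l).filter fun n =>
        ¬ ((∀ j, ‖(M + n) • θ j‖ < δ) ↔ ∀ j, ‖(M + n + h) • θ j‖ < δ)) ⊆
      Finset.univ.biUnion fun j => (Finset.range l).filter fun n =>
        ¬ (‖(M + n) • θ j‖ < δ ↔ ‖(M + n + h) • θ j‖ < δ) := by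
    intro n hn
    rw [Finset.mem_filter] at hn
    simp only [Finset.mem_biUnion, Finset.mem_univ, true_and, Finset.mem_filter, hn.1]
    by_contra hcon
    push Not at hcon
    exact hn.2 (forall_congr' fun j => by simpa only [not_lt] using hcon j)
  calc _ ≤ ((Finset.univ.biUnion fun j => (Finset.range l).filter fun n =>
        ¬ (‖(M + n) • θ j‖ < δ ↔ ‖(M + n + h) • θ j‖ < δ)).card : ℝ) :=
        Nat.cast_le.2 (Finset.card_le_card hsub)
    _ ≤ ∑ j, (((Finset.range l).filter fun n =>
        ¬ (‖(M + n) • θ j‖ < δ ↔ ‖(M + n + h) • θ j‖ < δ)).card : ℝ) := by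
        exact_mod_cast Finset.card_biUnion_le
    _ ≤ ∑ _j : Fin r, ε / r * l := Finset.sum_le_sum fun j _ =>
        H j h ((hh j).trans_le (Finset.inf'_le _ (Finset.mem_univ j))) M l
          ((Finset.le_sup (Finset.mem_univ j)).trans hl)
    _ = ε * l := by
        simp only [Finset.sum_const, Finset.card_univ, Fintype.card_fin, nsmul_eq_mul]
        field_simp

theorem exists_return_time_window {r : ℕ} (θ : Fin r → UnitAddCircle) {δ : ℝ} (hδ : 0 < δ) :
    ∃ q : ℕ, ∀ n : ℕ, ∃ h : ℕ, n ≤ h ∧ h ≤ n + q ∧ ∀ j, ‖h • θ j‖ < δ := by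
  have htb : TotallyBounded (Set.range fun n : ℕ => n • θ) :=
    isCompact_univ.totallyBounded.subset (Set.subset_univ _)
  obtain ⟨t, htsub, htfin, hcover⟩ := Metric.finite_approx_of_totallyBounded htb δ hδ
  choose! f hf using fun x (hx : x ∈ t) => htsub hx
  refine ⟨htfin.toFinset.sup f, fun n => ?_⟩
  obtain ⟨x, hx, hdist⟩ := Set.mem_iUnion₂.1
    (hcover ⟨n + htfin.toFinset.sup f, rfl⟩)
  have hle : f x ≤ htfin.toFinset.sup f := Finset.le_sup (htfin.mem_toFinset.2 hx)
  refine ⟨n + htfin.toFinset.sup f - f x, by omega, by omega, fun j => ?_⟩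
  rw [Metric.mem_ball, ← hf x hx, dist_eq_norm] at hdist
  have h1 := (pi_norm_lt_iff hδ).1 hdist j
  have h2 : (n + htfin.toFinset.sup f) • θ - f x • θ =
      (n + htfin.toFinset.sup f - f x) • θ := by
    rw [sub_eq_iff_eq_add, ← add_smul]
    congr 1
    omega
  simpa only [h2, Pi.smul_apply] using h1

theorem norm_sum_range_pow_le {z : ℂ} (hz : ‖z‖ = 1) (hz1 : z ≠ 1) (l : ℕ) :
    ‖∑ n ∈ Finset.range l, z ^ n‖ ≤ 2 / ‖z - 1‖ := by
  rw [geom_sum_eq hz1, norm_div]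
  gcongr
  calc ‖z ^ l - 1‖ ≤ ‖z ^ l‖ + ‖(1 : ℂ)‖ := norm_sub_le _ _
    _ = 2 := by rw [norm_pow, hz, one_pow, norm_one]; norm_num

theorem exists_bound_sum_toCircle {β : UnitAddCircle} (hβ : β ≠ 0) :
    ∃ B : ℝ, ∀ (γ : UnitAddCircle) (M l : ℕ),
      ‖∑ n ∈ Finset.range l, (AddCircle.toCircle ((M + n) • β + γ) : ℂ)‖ ≤ B := by
  have hne : (AddCircle.toCircle β : ℂ) ≠ 1 := by
    intro h
    apply hβ
    apply AddCircle.injective_toCircle (one_ne_zero (α := ℝ))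
    rw [AddCircle.toCircle_zero]
    exact Subtype.ext h
  refine ⟨2 / ‖(AddCircle.toCircle β : ℂ) - 1‖, fun γ M l => ?_⟩
  have h : ∀ n ∈ Finset.range l, (AddCircle.toCircle ((M + n) • β + γ) : ℂ) =
      (AddCircle.toCircle (M • β + γ) : ℂ) * (AddCircle.toCircle β : ℂ) ^ n := by
    intro n _
    rw [add_smul, add_right_comm, AddCircle.toCircle_add, AddCircle.toCircle_nsmul β n]
    push_cast
    rfl
  rw [Finset.sum_congr rfl h, ← Finset.mul_sum, norm_mul, Circle.norm_coe, one_mul]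
  exact norm_sum_range_pow_le (Circle.norm_coe _) hne l

theorem norm_sum_range_shift_sub_le (u : ℕ → ℂ) (hu : ∀ n, ‖u n‖ ≤ 1) (M l h : ℕ) :
    ‖∑ n ∈ Finset.range l, u (M + n) - ∑ n ∈ Finset.range l, u (M + n + h)‖ ≤ 2 * h := by
  have h1 : ∑ n ∈ Finset.range l, u (M + n) + ∑ n ∈ Finset.range h, u (M + l + n) =
      ∑ n ∈ Finset.range h, u (M + n) + ∑ n ∈ Finset.range l, u (M + n + h) := by
    have e1 := Finset.sum_range_add (fun n => u (M + n)) l h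
    have e2 := Finset.sum_range_add (fun n => u (M + n)) h l
    rw [add_comm h l, e1] at e2
    simpa only [← add_assoc, add_right_comm M h] using e2
  have h2 : ∑ n ∈ Finset.range l, u (M + n) - ∑ n ∈ Finset.range l, u (M + n + h) =
      ∑ n ∈ Finset.range h, u (M + n) - ∑ n ∈ Finset.range h, u (M + l + n) := by
    linear_combination h1
  rw [h2]
  have h3 : ∀ k, ‖∑ n ∈ Finset.range h, u (k + n)‖ ≤ h := fun k => by
    simpa using norm_sum_le_of_le (Finset.range h) (fun n _ => hu (k + n))
  linarith [norm_sub_le (∑ n ∈ Finset.range h, u (M + n)) (∑ n ∈ Finset.range h, u (M + l + n)),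
    h3 M, h3 (M + l)]

/-- Second moment of the short exponential sums produced by differencing `n ↦ n² α`. -/
theorem exists_second_moment_bound {α : UnitAddCircle} (hα : addOrderOf α = 0) (H : Finset ℕ) :
    ∃ B : ℝ, 0 ≤ B ∧ ∀ M l : ℕ,
      ∑ n ∈ Finset.range l,
        ‖∑ h ∈ H, (AddCircle.toCircle ((M + n + h) ^ 2 • α) : ℂ)‖ ^ 2 ≤ H.card * l + B := by
  have key : ∀ h h' : ℕ, ∃ B : ℝ, 0 ≤ B ∧ ∀ M l : ℕ,
      ‖∑ n ∈ Finset.range l, (AddCircle.toCircle ((M + n + h) ^ 2 • α) : ℂ) *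
        (starRingEnd ℂ) (AddCircle.toCircle ((M + n + h') ^ 2 • α) : ℂ)‖ ≤
        (if h = h' then (l : ℝ) else 0) + B := by
    intro h h'
    by_cases hh : h = h'
    · refine ⟨0, le_rfl, fun M l => ?_⟩
      rw [if_pos hh, add_zero]
      calc _ ≤ ∑ _n ∈ Finset.range l, (1 : ℝ) := norm_sum_le_of_le _ fun n _ => by
            rw [norm_mul, RCLike.norm_conj, Circle.norm_coe, Circle.norm_coe, one_mul]
        _ = l := by simp
    · have hne : (2 * ((h : ℤ) - h')) • α ≠ 0 := by
        intro h0
        rw [← addOrderOf_dvd_iff_zsmul_eq_zero, hα] at h0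
        simp at h0
        omega
      obtain ⟨B, hB⟩ := exists_bound_sum_toCircle hne
      refine ⟨B, (norm_nonneg _).trans (hB 0 0 0), fun M l => ?_⟩
      rw [if_neg hh, zero_add]
      refine le_trans (le_of_eq ?_) (hB (((h : ℤ) ^ 2 - (h' : ℤ) ^ 2) • α) M l)
      congr 1
      refine Finset.sum_congr rfl fun n _ => ?_
      rw [← Circle.coe_inv_eq_conj, ← Circle.coe_mul, ← AddCircle.toCircle_neg,
        ← AddCircle.toCircle_add]
      congr 2
      rw [← natCast_zsmul, ← natCast_zsmul, ← natCast_zsmul, ← neg_smul, ← add_smul, smul_smul,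
        ← add_smul]
      congr 1
      push_cast
      ring
  choose B hB0 hB using key
  refine ⟨∑ h ∈ H, ∑ h' ∈ H, B h h',
    Finset.sum_nonneg fun h _ => Finset.sum_nonneg fun h' _ => hB0 h h', fun M l => ?_⟩
  have h1 : ((∑ n ∈ Finset.range l,
        ‖∑ h ∈ H, (AddCircle.toCircle ((M + n + h) ^ 2 • α) : ℂ)‖ ^ 2 : ℝ) : ℂ) =
      ∑ h ∈ H, ∑ h' ∈ H, ∑ n ∈ Finset.range l, (AddCircle.toCircle ((M + n + h) ^ 2 • α) : ℂ) *
        (starRingEnd ℂ) (AddCircle.toCircle ((M + n + h') ^ 2 • α) : ℂ) := by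
    push_cast
    calc _ = ∑ n ∈ Finset.range l, ∑ h ∈ H, ∑ h' ∈ H,
          (AddCircle.toCircle ((M + n + h) ^ 2 • α) : ℂ) *
          (starRingEnd ℂ) (AddCircle.toCircle ((M + n + h') ^ 2 • α) : ℂ) := by
          refine Finset.sum_congr rfl fun n _ => ?_
          rw [← Complex.mul_conj', map_sum, Finset.sum_mul_sum]
      _ = _ := by
          rw [Finset.sum_comm]
          exact Finset.sum_congr rfl fun h _ => Finset.sum_comm
  have h2 : ∑ n ∈ Finset.range l,
        ‖∑ h ∈ H, (AddCircle.toCircle ((M + n + h) ^ 2 • α) : ℂ)‖ ^ 2 =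
      ‖((∑ n ∈ Finset.range l,
        ‖∑ h ∈ H, (AddCircle.toCircle ((M + n + h) ^ 2 • α) : ℂ)‖ ^ 2 : ℝ) : ℂ)‖ := by
    rw [Complex.norm_real, Real.norm_of_nonneg (Finset.sum_nonneg fun n _ => by positivity)]
  rw [h2, h1]
  calc _ ≤ ∑ h ∈ H, ∑ h' ∈ H, ((if h = h' then (l : ℝ) else 0) + B h h') :=
        norm_sum_le_of_le _ fun h _ => norm_sum_le_of_le _ fun h' _ => hB h h' M l
    _ = _ := by
        simp only [Finset.sum_add_distrib, Finset.sum_ite_eq]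
        congr 1
        rw [Finset.sum_ite_mem, Finset.inter_self, Finset.sum_const, nsmul_eq_mul]

theorem IsFiniteRankBohr0.exists_window {S : Set ℕ} (hS : IsFiniteRankBohr0 S) :
    ∃ q : ℕ, ∀ n : ℕ, ∃ h : ℕ, n ≤ h ∧ h ≤ n + q ∧ h ∈ S := by
  obtain ⟨r, θ, δ, hδ, rfl⟩ := hS
  exact exists_return_time_window θ hδ

theorem IsFiniteRankBohr0.infinite {S : Set ℕ} (hS : IsFiniteRankBohr0 S) : S.Infinite := by
  obtain ⟨q, hq⟩ := hS.exists_window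
  refine Set.infinite_of_not_bddAbove ?_
  rintro ⟨b, hb⟩
  obtain ⟨h, h1, -, h2⟩ := hq (b + 1)
  exact absurd (hb h2) (by omega)

theorem IsFiniteRankBohr0.weyl_sum {S : Set ℕ} (hS : IsFiniteRankBohr0 S) {α : UnitAddCircle}
    (hα : addOrderOf α = 0) {ε : ℝ} (hε : 0 < ε) :
    ∃ l₀ : ℕ, ∀ M l : ℕ, l₀ ≤ l →
      ‖∑ n ∈ Finset.range l,
        S.indicator (fun n => (AddCircle.toCircle (n ^ 2 • α) : ℂ)) (M + n)‖ ≤ ε * l := by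
  obtain ⟨r, θ, δ, hδ, hS'⟩ := hS
  obtain ⟨J, hJ⟩ := exists_nat_gt (8 / ε ^ 2)
  have hJ0 : (0 : ℝ) < J := lt_trans (by positivity) hJ
  obtain ⟨κ, hκ, l₁, hl₁⟩ := IsFiniteRankBohr0.boundary θ δ (ε / 8) (by positivity)
  have hinf : {n : ℕ | ∀ j, ‖n • θ j‖ < κ}.Infinite :=
    IsFiniteRankBohr0.infinite ⟨r, θ, κ, hκ, rfl⟩
  obtain ⟨H, hHsub, hHcard⟩ := hinf.exists_subset_card_eq J
  obtain ⟨B, hB0, hB⟩ := exists_second_moment_bound hα H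
  obtain ⟨l₂, hl₂⟩ := exists_nat_ge B
  obtain ⟨l₃, hl₃⟩ := exists_nat_ge (8 * (∑ h ∈ H, (h : ℝ)) / ε)
  refine ⟨max l₁ (max (l₂ + 1) l₃), fun M l hl => ?_⟩
  have hll₁ : l₁ ≤ l := (le_max_left _ _).trans hl
  have hll₂ : l₂ + 1 ≤ l := (le_max_left _ _).trans ((le_max_right _ _).trans hl)
  have hll₃ : l₃ ≤ l := (le_max_right _ _).trans ((le_max_right _ _).trans hl)
  have hlpos : (0 : ℝ) < l := by exact_mod_cast (by omega : 0 < l)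
  set e : ℕ → ℂ := fun n => (AddCircle.toCircle (n ^ 2 • α) : ℂ) with he
  have hen : ∀ n, ‖e n‖ = 1 := fun n => Circle.norm_coe _
  set u : ℕ → ℂ := S.indicator e with hu
  have hun : ∀ n, ‖u n‖ ≤ 1 := fun n => (norm_indicator_le_norm_self _ _).trans (hen n).le
  set U := ∑ n ∈ Finset.range l, u (M + n) with hU
  have hshift : ∀ h ∈ H, ‖U - ∑ n ∈ Finset.range l, u (M + n + h)‖ ≤ 2 * h := fun h _ =>
    norm_sum_range_shift_sub_le u hun M l h
  have hbd : ∀ h ∈ H, ‖∑ n ∈ Finset.range l, u (M + n + h) -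
      ∑ n ∈ Finset.range l, S.indicator 1 (M + n) * e (M + n + h)‖ ≤ ε / 8 * l := by
    intro h hh
    classical
    refine le_trans ?_ (hl₁ h (hHsub hh) M l hll₁)
    rw [← Finset.sum_sub_distrib, Finset.card_filter]
    push_cast
    refine norm_sum_le_of_le _ fun n _ => ?_
    have hmem : ∀ n, (n ∈ S ↔ ∀ j, ‖n • θ j‖ < δ) := fun n => by rw [hS']; rfl
    simp only [hu, ← hmem]
    by_cases h1 : M + n ∈ S <;> by_cases h2 : M + n + h ∈ S <;> simp [h1, h2, hen]
  have hmain : ‖∑ h ∈ H, ∑ n ∈ Finset.range l, S.indicator 1 (M + n) * e (M + n + h)‖ ≤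
      ε / 2 * J * l := by
    rw [Finset.sum_comm]
    have h1 : ‖∑ n ∈ Finset.range l, ∑ h ∈ H, S.indicator 1 (M + n) * e (M + n + h)‖ ≤
        ∑ n ∈ Finset.range l, ‖∑ h ∈ H, e (M + n + h)‖ := by
      refine norm_sum_le_of_le _ fun n _ => ?_
      rw [← Finset.mul_sum, norm_mul]
      refine mul_le_of_le_one_left (norm_nonneg _) ?_
      refine (norm_indicator_le_norm_self _ _).trans ?_
      simp
    refine h1.trans ?_
    have h2 : (∑ n ∈ Finset.range l, ‖∑ h ∈ H, e (M + n + h)‖) ^ 2 ≤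
        l * ∑ n ∈ Finset.range l, ‖∑ h ∈ H, e (M + n + h)‖ ^ 2 := by
      simpa using sq_sum_le_card_mul_sum_sq (s := Finset.range l)
        (f := fun n => ‖∑ h ∈ H, e (M + n + h)‖)
    have h3 := hB M l
    rw [hHcard] at h3
    have hJ1 : (1 : ℝ) ≤ J := by
      have : 0 < J := by exact_mod_cast hJ0
      exact_mod_cast this
    have h4 : (J : ℝ) * l + B ≤ 2 * J * l := by
      have : (l₂ : ℝ) + 1 ≤ l := by exact_mod_cast hll₂
      nlinarith
    refine abs_le_of_sq_le_sq' ?_ (by positivity) |>.2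
    calc _ ≤ (l : ℝ) * (2 * J * l) := h2.trans (by gcongr; exact h3.trans h4)
      _ ≤ (ε / 2 * J * l) ^ 2 := by
        rw [div_lt_iff₀ (by positivity)] at hJ
        have : 2 * (J : ℝ) * l ^ 2 * 8 ≤ 2 * (J : ℝ) * l ^ 2 * (J * ε ^ 2) := by gcongr
        nlinarith
  have hsum : (J : ℂ) * U = (∑ h ∈ H, (U - ∑ n ∈ Finset.range l, u (M + n + h))) +
      (∑ h ∈ H, (∑ n ∈ Finset.range l, u (M + n + h) -
        ∑ n ∈ Finset.range l, S.indicator 1 (M + n) * e (M + n + h))) +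
      ∑ h ∈ H, ∑ n ∈ Finset.range l, S.indicator 1 (M + n) * e (M + n + h) := by
    simp only [Finset.sum_sub_distrib, Finset.sum_const, hHcard, nsmul_eq_mul]
    ring
  have hfin : (J : ℝ) * ‖U‖ ≤ (∑ h ∈ H, 2 * (h : ℝ)) + J * (ε / 8 * l) + ε / 2 * J * l := by
    calc (J : ℝ) * ‖U‖ = ‖(J : ℂ) * U‖ := by simp
      _ ≤ _ := by
        rw [hsum]
        refine norm_add₃_le.trans (add_le_add (add_le_add ?_ ?_) hmain)
        · exact norm_sum_le_of_le _ hshift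
        · refine (norm_sum_le_of_le _ hbd).trans ?_
          rw [Finset.sum_const, hHcard, nsmul_eq_mul]
  rw [← Finset.mul_sum] at hfin
  have h5 : 8 * (∑ h ∈ H, (h : ℝ)) ≤ l * ε := by
    rw [div_le_iff₀ hε] at hl₃
    refine hl₃.trans ?_
    gcongr
  have hJ1 : (1 : ℝ) ≤ J := by
    have : 0 < J := by exact_mod_cast hJ0
    exact_mod_cast this
  have h6 : (l : ℝ) * ε ≤ J * (l * ε) := le_mul_of_one_le_left (by positivity) hJ1
  refine le_of_mul_le_mul_left ?_ hJ0
  nlinarith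

theorem integral_fourier_of_ne_zero {k : ℤ} (hk : k ≠ 0) :
    ∫ x : UnitAddCircle, fourier k x ∂AddCircle.haarAddCircle = 0 :=
  integral_eq_zero_of_add_right_eq_neg (fourier_add_half_inv_index hk one_pos)

theorem addOrderOf_zsmul_eq_zero {α : UnitAddCircle} (hα : addOrderOf α = 0) {k : ℤ}
    (hk : k ≠ 0) : addOrderOf (k • α) = 0 := by
  rw [addOrderOf_eq_zero_iff'] at *
  intro n hn h0
  rw [← natCast_zsmul, smul_smul, ← addOrderOf_dvd_iff_zsmul_eq_zero,
    addOrderOf_eq_zero_iff'.2 hα] at h0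
  simp [hk] at h0
  omega

theorem IsFiniteRankBohr0.equidistribution_complex {S : Set ℕ} (hS : IsFiniteRankBohr0 S)
    {α : UnitAddCircle} (hα : addOrderOf α = 0) (g : C(UnitAddCircle, ℂ)) {ε : ℝ} (hε : 0 < ε) :
    ∃ l₀ : ℕ, ∀ M l : ℕ, l₀ ≤ l →
      ‖∑ n ∈ Finset.range l, S.indicator
        (fun n => g (n ^ 2 • α) - ∫ x, g x ∂AddCircle.haarAddCircle) (M + n)‖ ≤ ε * l := by
  have hgi : ∀ g : C(UnitAddCircle, ℂ), Integrable g AddCircle.haarAddCircle := fun g =>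
    g.continuous.integrable_of_hasCompactSupport (HasCompactSupport.of_compactSpace _)
  have hspan : ∀ p ∈ Submodule.span ℂ (Set.range (@fourier (1 : ℝ))), ∀ ε : ℝ, 0 < ε →
      ∃ l₀ : ℕ, ∀ M l : ℕ, l₀ ≤ l → ‖∑ n ∈ Finset.range l, S.indicator
        (fun n => p (n ^ 2 • α) - ∫ x, p x ∂AddCircle.haarAddCircle) (M + n)‖ ≤ ε * l := by
    intro p hp
    induction hp using Submodule.span_induction with
    | mem p hp =>
      obtain ⟨k, rfl⟩ := hp
      intro ε hε
      by_cases hk : k = 0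
      · subst hk
        refine ⟨0, fun M l _ => ?_⟩
        simp only [fourier_zero, integral_const, probReal_univ, one_smul, sub_self,
          Set.indicator_zero, Finset.sum_const_zero, norm_zero]
        positivity
      · obtain ⟨l₀, h⟩ := hS.weyl_sum (addOrderOf_zsmul_eq_zero hα hk) hε
        refine ⟨l₀, fun M l hl => ?_⟩
        rw [integral_fourier_of_ne_zero hk]
        simp only [sub_zero, fourier_apply]
        simpa only [smul_comm k] using h M l hl
    | zero =>
      intro ε hε
      refine ⟨0, fun M l _ => ?_⟩
      simp only [ContinuousMap.zero_apply, integral_zero, sub_self,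
          Set.indicator_zero, Finset.sum_const_zero, norm_zero]
      positivity
    | add p q _ _ hp hq =>
      intro ε hε
      obtain ⟨l₁, h₁⟩ := hp (ε / 2) (by positivity)
      obtain ⟨l₂, h₂⟩ := hq (ε / 2) (by positivity)
      refine ⟨max l₁ l₂, fun M l hl => ?_⟩
      have e1 : (fun n : ℕ => (p + q) (n ^ 2 • α) -
          ∫ x, (p + q) x ∂AddCircle.haarAddCircle) =
          (fun n => p (n ^ 2 • α) - ∫ x, p x ∂AddCircle.haarAddCircle) +
          (fun n => q (n ^ 2 • α) - ∫ x, q x ∂AddCircle.haarAddCircle) := by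
        funext n
        simp only [ContinuousMap.add_apply, Pi.add_apply]
        rw [integral_add (hgi p) (hgi q)]
        ring
      rw [e1, Set.indicator_add']
      simp only [Pi.add_apply]
      rw [Finset.sum_add_distrib]
      refine (norm_add_le _ _).trans ?_
      linarith [h₁ M l ((le_max_left _ _).trans hl), h₂ M l ((le_max_right _ _).trans hl)]
    | smul c p _ hp =>
      intro ε hε
      obtain ⟨l₁, h₁⟩ := hp (ε / (‖c‖ + 1)) (by positivity)
      refine ⟨l₁, fun M l hl => ?_⟩
      have e1 : (fun n : ℕ => (c • p) (n ^ 2 • α) -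
          ∫ x, (c • p) x ∂AddCircle.haarAddCircle) =
          c • (fun n => p (n ^ 2 • α) - ∫ x, p x ∂AddCircle.haarAddCircle) := by
        funext n
        simp only [ContinuousMap.smul_apply, Pi.smul_apply]
        rw [integral_smul, smul_sub]
      have e2 : ∀ (f : ℕ → ℂ) (n : ℕ), S.indicator (c • f) n = c • S.indicator f n := by
        intro f n
        classical
        rw [Set.indicator_apply, Set.indicator_apply, Pi.smul_apply]
        split_ifs
        · rfl
        · rw [smul_zero]
      simp only [e1, e2]
      rw [← Finset.smul_sum, norm_smul]
      calc _ ≤ (‖c‖ + 1) * (ε / (‖c‖ + 1) * l) := by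
            gcongr
            · linarith
            · exact h₁ M l hl
        _ = ε * l := by field_simp
  have hg : g ∈ closure (Submodule.span ℂ (Set.range (@fourier (1 : ℝ))) :
      Set C(UnitAddCircle, ℂ)) := by
    rw [← Submodule.topologicalClosure_coe, span_fourier_closure_eq_top]
    trivial
  obtain ⟨p, hp, hgp⟩ := Metric.mem_closure_iff.1 hg (ε / 4) (by positivity)
  obtain ⟨l₀, h₀⟩ := hspan p hp (ε / 2) (by positivity)
  refine ⟨l₀, fun M l hl => ?_⟩
  have hclose : ∀ x, ‖g x - p x‖ ≤ ε / 4 := fun x => by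
    rw [← dist_eq_norm]
    exact (ContinuousMap.dist_apply_le_dist x).trans hgp.le
  have hI : ‖(∫ x, g x ∂AddCircle.haarAddCircle) - ∫ x, p x ∂AddCircle.haarAddCircle‖ ≤
      ε / 4 := by
    rw [← integral_sub (hgi g) (hgi p)]
    simpa using norm_integral_le_of_norm_le_const (μ := AddCircle.haarAddCircle)
      (Filter.Eventually.of_forall hclose)
  have hdiff : ‖∑ n ∈ Finset.range l, S.indicator
        (fun n => g (n ^ 2 • α) - ∫ x, g x ∂AddCircle.haarAddCircle) (M + n) -
      ∑ n ∈ Finset.range l, S.indicator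
        (fun n => p (n ^ 2 • α) - ∫ x, p x ∂AddCircle.haarAddCircle) (M + n)‖ ≤ ε / 2 * l := by
    rw [← Finset.sum_sub_distrib]
    calc _ ≤ ∑ n ∈ Finset.range l, ε / 2 := norm_sum_le_of_le _ fun n _ => by
          rw [← Pi.sub_apply (S.indicator _), ← Set.indicator_sub']
          refine (norm_indicator_le_norm_self _ _).trans ?_
          simp only [Pi.sub_apply]
          rw [sub_sub_sub_comm]
          refine (norm_sub_le _ _).trans ?_
          linarith [hclose ((M + n) ^ 2 • α)]
      _ = ε / 2 * l := by rw [Finset.sum_const, Finset.card_range, nsmul_eq_mul, mul_comm]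
  refine (norm_le_norm_sub_add _ (∑ n ∈ Finset.range l, S.indicator
    (fun n => p (n ^ 2 • α) - ∫ x, p x ∂AddCircle.haarAddCircle) (M + n))).trans ?_
  linarith [h₀ M l hl]

open Classical in
theorem IsFiniteRankBohr0.exists_card_lower_bound {S : Set ℕ} (hS : IsFiniteRankBohr0 S) :
    ∃ q : ℕ, 0 < q ∧ ∀ M l : ℕ, l / q ≤ ((Finset.Ico M (M + l)).filter (· ∈ S)).card := by
  obtain ⟨q, hq⟩ := hS.exists_window
  refine ⟨q + 1, q.succ_pos, fun M l => ?_⟩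
  choose f hf1 hf2 hf3 using fun i : ℕ => hq (M + i * (q + 1))
  have h := Finset.card_le_card_of_injOn (s := Finset.range (l / (q + 1)))
    (t := (Finset.Ico M (M + l)).filter (· ∈ S)) f ?_ ?_
  · simpa using h
  · intro i hi
    have hi' : i + 1 ≤ l / (q + 1) := by simpa using hi
    have h1 : (i + 1) * (q + 1) ≤ l := (Nat.le_div_iff_mul_le q.succ_pos).1 hi'
    have h2 := hf1 i
    have h3 := hf2 i
    simp only [Finset.coe_filter, Finset.mem_Ico, Set.mem_ofPred_eq]
    refine ⟨⟨by omega, ?_⟩, hf3 i⟩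
    rw [add_mul] at h1
    omega
  · have hmono : StrictMono f := strictMono_nat_of_lt_succ fun i => by
      have h2 := hf1 (i + 1)
      have h3 := hf2 i
      rw [add_mul] at h2
      omega
    exact hmono.injective.injOn

open Classical in
/-- The squares `n² α`, with `n` in a Bohr set, equidistribute along long intervals. -/
theorem IsFiniteRankBohr0.equidistribution {S : Set ℕ} (hS : IsFiniteRankBohr0 S)
    {α : UnitAddCircle} (hα : addOrderOf α = 0) {g : UnitAddCircle → ℝ} (hg : Continuous g)
    {ε : ℝ} (hε : 0 < ε) :
    ∃ l₀ : ℕ, ∀ M l : ℕ, l₀ ≤ l →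
      1 ≤ ε * ((Finset.Ico M (M + l)).filter (· ∈ S)).card ∧
      ∑ n ∈ (Finset.Ico M (M + l)).filter (· ∈ S), g (n ^ 2 • α) ≤
        (∫ x, g x ∂AddCircle.haarAddCircle + ε) *
          ((Finset.Ico M (M + l)).filter (· ∈ S)).card := by
  obtain ⟨q, hq, hcard⟩ := hS.exists_card_lower_bound
  obtain ⟨l₁, h₁⟩ := hS.equidistribution_complex hα
    ⟨fun x => (g x : ℂ), Complex.continuous_ofReal.comp hg⟩ (ε := ε / (2 * q)) (by positivity)
  obtain ⟨k, hk⟩ := exists_nat_ge (1 / ε)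
  refine ⟨max l₁ ((k + 1) * q), fun M l hl => ?_⟩
  have hl₁ := (le_max_left _ _).trans hl
  have hl₂ := (le_max_right _ _).trans hl
  set F := (Finset.Ico M (M + l)).filter (· ∈ S) with hF
  have hc : l / q ≤ F.card := by convert hcard M l
  have hk1 : k + 1 ≤ l / q := (Nat.le_div_iff_mul_le hq).2 hl₂
  have hlF : (l : ℝ) ≤ 2 * q * F.card := by
    have h1 : l < (l / q + 1) * q := Nat.lt_div_mul_add hq |>.trans_eq (by ring)
    have h2 : l / q + 1 ≤ 2 * F.card := by omega
    have h3 : l ≤ 2 * F.card * q := h1.le.trans (Nat.mul_le_mul_right q h2)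
    have : (l : ℝ) ≤ 2 * F.card * q := by exact_mod_cast h3
    linarith
  have hkF : (k : ℝ) ≤ F.card := by
    exact_mod_cast (by omega : k ≤ F.card)
  refine ⟨?_, ?_⟩
  · rw [div_le_iff₀ hε] at hk
    nlinarith
  · have h2 := h₁ M l hl₁
    have h3 : ∑ n ∈ Finset.range l, S.indicator (fun n => ((g (n ^ 2 • α) : ℝ) : ℂ) -
        ∫ x, ((g x : ℝ) : ℂ) ∂AddCircle.haarAddCircle) (M + n) =
        ((∑ n ∈ F, (g (n ^ 2 • α) - ∫ x, g x ∂AddCircle.haarAddCircle) : ℝ) : ℂ) := by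
      rw [integral_complex_ofReal, hF, Finset.sum_filter, Finset.sum_Ico_eq_sum_range,
        Nat.add_sub_cancel_left]
      push_cast
      refine Finset.sum_congr rfl fun n _ => ?_
      rw [Set.indicator_apply]
      split_ifs <;> simp
    simp only [ContinuousMap.coe_mk] at h2
    rw [h3, Complex.norm_real, Real.norm_eq_abs, Finset.sum_sub_distrib, Finset.sum_const,
      nsmul_eq_mul] at h2
    have h4 := (abs_le.1 h2).2
    have h5 : ε / (2 * q) * l ≤ ε * F.card := by
      calc ε / (2 * q) * l ≤ ε / (2 * q) * (2 * q * F.card) := by gcongr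
        _ = ε * F.card := by field_simp
    linarith

/-- Haar probability measure on the two-dimensional torus. -/
noncomputable abbrev torusMeasure : Measure (Fin 2 → UnitAddCircle) :=
  Measure.pi fun _ => AddCircle.haarAddCircle

theorem UnitAddCircle.exists_matrix_smul_eq {k : ℕ} (A : Matrix (Fin k) (Fin k) ℤ)
    (hA : A.det ≠ 0) (w : Fin k → UnitAddCircle) :
    ∃ z : Fin k → UnitAddCircle, ∀ i, ∑ j, A i j • z j = w i := by
  refine ⟨fun j => ∑ i, A.adjugate j i • DivisibleBy.div (w i) A.det, fun i => ?_⟩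
  calc ∑ j, A i j • ∑ l, A.adjugate j l • DivisibleBy.div (w l) A.det
      = ∑ l, (A * A.adjugate) i l • DivisibleBy.div (w l) A.det := by
        simp only [Finset.smul_sum, smul_smul, Matrix.mul_apply, Finset.sum_smul]
        exact Finset.sum_comm
    _ = w i := by
        rw [Matrix.mul_adjugate]
        simp only [Matrix.smul_apply, Matrix.one_apply, smul_eq_mul, mul_ite, mul_one, mul_zero,
          ite_smul, zero_smul, Finset.sum_ite_eq, Finset.mem_univ, if_true]
        exact DivisibleBy.div_cancel _ hA

/-- The affine skew product `(x, y) ↦ (x + α, y + 2 • x + α)`, conjugate to `y ↦ y + n² α` in time. -/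
noncomputable def skewShift (α : UnitAddCircle) (z : Fin 2 → UnitAddCircle) :
    Fin 2 → UnitAddCircle :=
  ![z 0 + α, z 1 + (2 : ℕ) • z 0 + α]

theorem skewShift_iterate (α : UnitAddCircle) (n : ℕ) (z : Fin 2 → UnitAddCircle) :
    (skewShift α)^[n] z = ![z 0 + n • α, z 1 + (2 * n) • z 0 + n ^ 2 • α] := by
  induction n with
  | zero =>
    ext i
    fin_cases i <;> simp
  | succ n ih =>
    rw [Function.iterate_succ_apply', ih]
    ext i
    fin_cases i
    · simp only [skewShift, Matrix.cons_val_zero, Fin.zero_eta]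
      rw [add_smul, one_smul, add_assoc]
    · simp only [skewShift, Matrix.cons_val_zero, Fin.mk_one, Matrix.cons_val_one]
      module

theorem measurePreserving_diagonal_torus {n : ℕ} (hn : n ≠ 0) :
    MeasurePreserving (fun z : Fin 2 → UnitAddCircle => ![n • z 0, z 1])
      torusMeasure torusMeasure := by
  let f : (Fin 2 → UnitAddCircle) →+ (Fin 2 → UnitAddCircle) :=
    { toFun := fun z => ![n • z 0, z 1]
      map_zero' := by ext i; fin_cases i <;> simp
      map_add' := fun z w => by ext i; fin_cases i <;> simp }
  refine AddMonoidHom.measurePreserving (f := f) ?_ ?_ rfl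
  · change Continuous fun z : Fin 2 → UnitAddCircle => ![n • z 0, z 1]
    fun_prop
  · intro w
    refine ⟨![DivisibleBy.div (w 0) (n : ℤ), w 1], ?_⟩
    ext i
    fin_cases i
    · change n • DivisibleBy.div (w 0) (n : ℤ) = w 0
      rw [← natCast_zsmul]
      exact DivisibleBy.div_cancel _ (by exact_mod_cast hn)
    · rfl

theorem measurePreserving_skewShift (α : UnitAddCircle) :
    MeasurePreserving (skewShift α) torusMeasure torusMeasure := by
  let f : (Fin 2 → UnitAddCircle) →+ (Fin 2 → UnitAddCircle) :=
    { toFun := fun z => ![z 0, z 1 + (2 : ℕ) • z 0]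
      map_zero' := by ext i; fin_cases i <;> simp
      map_add' := fun z w => by
        ext i
        fin_cases i
        · simp
        · change (z 1 + w 1) + (2 : ℕ) • (z 0 + w 0) =
            (z 1 + (2 : ℕ) • z 0) + (w 1 + (2 : ℕ) • w 0)
          module }
  have hf : MeasurePreserving f torusMeasure torusMeasure := by
    refine AddMonoidHom.measurePreserving (f := f) ?_ ?_ rfl
    · change Continuous fun z : Fin 2 → UnitAddCircle => ![z 0, z 1 + (2 : ℕ) • z 0]
      fun_prop
    · intro w
      refine ⟨![w 0, w 1 - (2 : ℕ) • w 0], ?_⟩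
      ext i
      fin_cases i
      · rfl
      · exact sub_add_cancel _ _
  have h := (measurePreserving_add_right torusMeasure (fun _ => α)).comp hf
  convert h using 1
  funext z
  ext i
  fin_cases i <;> rfl

theorem mFourier_skewShift (α : UnitAddCircle) (n : Fin 2 → ℤ) (z : Fin 2 → UnitAddCircle) :
    UnitAddTorus.mFourier n (skewShift α z) =
      fourier (n 0 + n 1) α * UnitAddTorus.mFourier ![n 0 + 2 * n 1, n 1] z := by
  simp only [UnitAddTorus.mFourier, ContinuousMap.coe_mk, Fin.prod_univ_two, skewShift,
    Matrix.cons_val_zero, Matrix.cons_val_one, fourier_apply, ← Circle.coe_mul,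
    ← AddCircle.toCircle_add]
  congr 2
  module

open UnitAddTorus in
theorem hasSum_sq_mFourierCoeff_indicator {s : Set (Fin 2 → UnitAddCircle)} (hs : MeasurableSet s) :
    HasSum (fun n : Fin 2 → ℤ => ‖∫ z, mFourier (-n) z * s.indicator 1 z ∂torusMeasure‖ ^ 2)
      (torusMeasure.real s) := by
  let f := indicatorConstLp (μ := torusMeasure) 2 hs (measure_ne_top _ _) (1 : ℂ)
  have hf : f =ᵐ[torusMeasure] s.indicator fun _ => (1 : ℂ) := indicatorConstLp_coeFn
  have h : HasSum (fun n : Fin 2 → ℤ => ‖∫ z, mFourier (-n) z • f z ∂torusMeasure‖ ^ 2)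
      (∫ z, ‖f z‖ ^ 2 ∂torusMeasure) := hasSum_sq_mFourierCoeff f
  have h1 : ∫ z, ‖f z‖ ^ 2 ∂torusMeasure = torusMeasure.real s := by
    rw [← integral_indicator_one hs]
    refine integral_congr_ae ?_
    filter_upwards [hf] with z hz
    rw [hz]
    by_cases hzs : z ∈ s <;> simp [hzs]
  rw [h1] at h
  convert h using 4 with n
  refine integral_congr_ae ?_
  filter_upwards [hf] with z hz
  rw [hz]
  rfl

open UnitAddTorus in
theorem ergodic_skewShift {α : UnitAddCircle} (hα : addOrderOf α = 0) :
    Ergodic (skewShift α) torusMeasure := by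
  refine { toMeasurePreserving := measurePreserving_skewShift α, toPreErgodic := ⟨?_⟩ }
  intro s hs hinv
  set c : (Fin 2 → ℤ) → ℂ := fun n => ∫ z, mFourier (-n) z * s.indicator 1 z ∂torusMeasure with hc
  have hsum : HasSum (fun n => ‖c n‖ ^ 2) (torusMeasure.real s) :=
    hasSum_sq_mFourierCoeff_indicator hs
  have hrec : ∀ n, c n = fourier (-(n 0 + n 1)) α * c ![n 0 + 2 * n 1, n 1] := by
    intro n
    have hm : AEStronglyMeasurable (fun z => mFourier (-n) z * s.indicator 1 z)
        (torusMeasure.map (skewShift α)) := by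
      refine ((mFourier (-n)).continuous.measurable.mul ?_).aestronglyMeasurable
      exact measurable_one.indicator hs
    have h1 : c n = ∫ z, mFourier (-n) (skewShift α z) * s.indicator 1 (skewShift α z)
        ∂torusMeasure := by
      rw [hc]
      conv_lhs => rw [← (measurePreserving_skewShift α).map_eq]
      exact integral_map (measurePreserving_skewShift α).measurable.aemeasurable hm
    rw [h1, hc, ← integral_const_mul]
    congr 1
    funext z
    have h2 : s.indicator (1 : (Fin 2 → UnitAddCircle) → ℂ) (skewShift α z) = s.indicator 1 z := by
      have h3 : skewShift α z ∈ s ↔ z ∈ s := by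
        rw [← Set.mem_preimage, hinv]
      by_cases hz : z ∈ s <;> simp [h3, hz]
    rw [h2, mFourier_skewShift, mul_assoc]
    congr 3
    · simp only [Pi.neg_apply]
      ring
    · congr 1
      ext i
      fin_cases i
      · simp only [Pi.neg_apply, Fin.zero_eta, Matrix.cons_val_zero]
        ring
      · rfl
  have hnorm : ∀ (n : Fin 2 → ℤ) (k : ℕ), ‖c ![n 0 + 2 * k * n 1, n 1]‖ = ‖c n‖ := by
    intro n k
    induction k with
    | zero =>
      congr 2
      ext i
      fin_cases i <;> simp
    | succ k ih =>
      rw [← ih, hrec ![n 0 + 2 * k * n 1, n 1], norm_mul, fourier_apply, Circle.norm_coe, one_mul]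
      congr 3
      simp only [Matrix.cons_val_zero, Matrix.cons_val_one]
      push_cast
      ring
  have hzero : ∀ n, n ≠ 0 → c n = 0 := by
    intro n hn
    by_cases h1 : n 1 = 0
    · have h0 : n 0 ≠ 0 := fun h0 => hn <| by
        ext i
        fin_cases i
        · exact h0
        · exact h1
      have h2 := hrec n
      have h3 : ![n 0 + 2 * n 1, n 1] = n := by
        ext i
        fin_cases i <;> simp [h1]
      rw [h3, h1, add_zero] at h2
      by_contra hcn
      have h4 : (fourier (-n 0) α : ℂ) = 1 := mul_right_cancel₀ hcn (by rw [one_mul, ← h2])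
      rw [fourier_apply] at h4
      have h5 : (-n 0) • α = 0 := by
        apply AddCircle.injective_toCircle (one_ne_zero (α := ℝ))
        rw [AddCircle.toCircle_zero]
        exact Subtype.ext h4
      rw [← addOrderOf_dvd_iff_zsmul_eq_zero, hα] at h5
      simp at h5
      exact h0 h5
    · have hinj : Function.Injective fun k : ℕ => ![n 0 + 2 * k * n 1, n 1] := by
        intro k k' hk
        have := congrFun hk 0
        simp [h1] at this
        exact this
      have h2 := hsum.summable.comp_injective hinj
      simp only [Function.comp_def, hnorm] at h2
      rw [summable_const_iff] at h2
      simpa using h2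
  have h0 : c 0 = torusMeasure.real s := by
    rw [hc]
    simp only [neg_zero, mFourier_zero, ContinuousMap.one_apply, one_mul]
    rw [integral_indicator hs]
    simp
  have hsq : torusMeasure.real s = torusMeasure.real s ^ 2 := by
    have h1 := hsum.unique (hasSum_single 0 fun n hn => by rw [hzero n hn]; simp)
    rw [h0] at h1
    simpa using h1
  have h01 : torusMeasure.real s = 0 ∨ torusMeasure.real s = 1 := by
    have : torusMeasure.real s * (torusMeasure.real s - 1) = 0 := by linarith
    rcases mul_eq_zero.1 this with h | h
    · exact Or.inl h
    · exact Or.inr (by linarith)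
  rw [Filter.eventuallyConst_set']
  rcases h01 with h | h
  · left
    rw [measureReal_eq_zero_iff] at h
    exact ae_eq_empty.2 h
  · right
    rw [ae_eq_univ, prob_compl_eq_zero_iff hs]
    rw [Measure.real, ENNReal.toReal_eq_one_iff] at h
    exact h

theorem haarAddCircle_eq_volume :
    (AddCircle.haarAddCircle : Measure UnitAddCircle) = volume := by
  rw [AddCircle.volume_eq_smul_haarAddCircle]
  simp

theorem measurePreserving_vandermonde {b : Fin 3 → ℕ} (hb : Function.Injective b) :
    MeasurePreserving (fun (p : UnitAddCircle × (Fin 2 → UnitAddCircle)) (i : Fin 3) =>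
        p.2 1 + b i • p.2 0 + b i ^ 2 • p.1)
      (AddCircle.haarAddCircle.prod torusMeasure)
      (Measure.pi fun _ => AddCircle.haarAddCircle) := by
  let f : UnitAddCircle × (Fin 2 → UnitAddCircle) →+ (Fin 3 → UnitAddCircle) :=
    { toFun := fun p i => p.2 1 + b i • p.2 0 + b i ^ 2 • p.1
      map_zero' := by ext i; simp
      map_add' := fun p p' => by
        ext i
        simp only [Prod.fst_add, Prod.snd_add, Pi.add_apply]
        module }
  have : torusMeasure.IsAddHaarMeasure := inferInstance
  have : (AddCircle.haarAddCircle.prod torusMeasure :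
      Measure (UnitAddCircle × (Fin 2 → UnitAddCircle))).IsAddHaarMeasure :=
    Measure.prod.instIsAddHaarMeasure _ _
  refine AddMonoidHom.measurePreserving (f := f) ?_ ?_ ?_
  · change Continuous fun (p : UnitAddCircle × (Fin 2 → UnitAddCircle)) (i : Fin 3) =>
        p.2 1 + b i • p.2 0 + b i ^ 2 • p.1
    fun_prop
  · intro w
    have hdet : (Matrix.vandermonde fun i => (b i : ℤ)).det ≠ 0 :=
      Matrix.det_vandermonde_ne_zero_iff.2 (Nat.cast_injective.comp hb)
    obtain ⟨z, hz⟩ := UnitAddCircle.exists_matrix_smul_eq _ hdet w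
    refine ⟨(z 2, ![z 1, z 0]), ?_⟩
    ext i
    rw [← hz i]
    change z 0 + b i • z 1 + b i ^ 2 • z 2 = _
    simp only [Fin.sum_univ_three, Matrix.vandermonde_apply]
    rw [← natCast_zsmul, ← natCast_zsmul]
    simp
  · simp

/-- The recurrence lower bound along a Bohr set, for a given system and a given set. -/
def BohrRecurrenceBound (a : Fin 4 → ℕ) (C ℓ : ℝ) {X : Type} [MeasurableSpace X] (μ : Measure X)
    (T : X → X) (A : Set X) : Prop :=
  ∃ S : Set ℕ, IsFiniteRankBohr0 S ∧
    ∀ ε : ℝ, 0 < ε → ∀ L : ℕ, ∃ M N : ℕ, M < N ∧ N - M > L ∧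
      (S ∩ Set.Ico M N).Nonempty ∧
      (∑ᶠ n ∈ S ∩ Set.Ico M N, (μ (⋂ i : Fin 4, T^[a i * n] ⁻¹' A)).toReal) /
          ((S ∩ Set.Ico M N).ncard : ℝ)
        > C * (μ A).toReal ^ ℓ - ε

theorem BohrRecurrenceBound.le_one {a : Fin 4 → ℕ} {C ℓ : ℝ} {X : Type} [MeasurableSpace X]
    {μ : Measure X} [IsProbabilityMeasure μ] {T : X → X}
    (h : BohrRecurrenceBound a C ℓ μ T Set.univ) : C ≤ 1 := by
  obtain ⟨S, -, h⟩ := h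
  refine le_of_forall_pos_le_add fun ε hε => ?_
  obtain ⟨M, N, -, -, hne, hlt⟩ := h ε hε 0
  have hfin : (S ∩ Set.Ico M N).Finite := (Set.finite_Ico M N).subset Set.inter_subset_right
  have hpos : (0 : ℝ) < (S ∩ Set.Ico M N).ncard := by
    exact_mod_cast (Set.ncard_pos hfin).2 hne
  simp only [Set.preimage_univ, Set.iInter_univ, measure_univ, ENNReal.toReal_one,
    Real.one_rpow, mul_one] at hlt
  rw [finsum_mem_eq_finite_toFinset_sum _ hfin, Finset.sum_const, nsmul_eq_mul, mul_one,
    ← Set.ncard_eq_toFinset_card _ hfin, div_self hpos.ne'] at hlt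
  linarith

theorem BohrRecurrenceBound.le_measure_configurations {a : Fin 4 → ℕ} {C ℓ : ℝ}
    {α : UnitAddCircle} (hα : addOrderOf α = 0) {A B : Set UnitAddCircle} (hA : IsClosed A)
    (hB : IsOpen B) (hAB : A ⊆ B)
    (h : BohrRecurrenceBound a C ℓ torusMeasure (skewShift α) {z | z 1 ∈ A}) :
    C * (AddCircle.haarAddCircle.real A) ^ ℓ ≤
      (AddCircle.haarAddCircle.prod torusMeasure).real
        {p | ∀ i, p.2 1 + a i • p.2 0 + a i ^ 2 • p.1 ∈ B} := by
  classical
  obtain ⟨φ, hφ0, hφ1, hφ⟩ := exists_continuous_zero_one_of_isClosed (s := Bᶜ) (t := A)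
    hB.isClosed_compl hA (Set.disjoint_compl_left_iff_subset.2 hAB)
  set Φ : UnitAddCircle → (Fin 2 → UnitAddCircle) → ℝ :=
    fun t z => ∏ i, φ (z 1 + a i • z 0 + a i ^ 2 • t) with hΦ
  have hΦc : Continuous (Function.uncurry Φ) := by
    change Continuous fun p : UnitAddCircle × (Fin 2 → UnitAddCircle) =>
      ∏ i, φ (p.2 1 + a i • p.2 0 + a i ^ 2 • p.1)
    fun_prop
  have hΦ0 : ∀ t z, 0 ≤ Φ t z := fun t z => Finset.prod_nonneg fun i _ => (hφ _).1
  have hΦ1 : ∀ t z, Φ t z ≤ 1 := fun t z =>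
    Finset.prod_le_one (fun i _ => (hφ _).1) fun i _ => (hφ _).2
  set G : UnitAddCircle → ℝ := fun t => ∫ z, Φ t z ∂torusMeasure with hG
  have hGc : Continuous G := by
    have := continuous_parametric_integral_of_continuous (μ := torusMeasure)
      (s := Set.univ) hΦc isCompact_univ
    simpa only [Measure.restrict_univ] using this
  have hgiΦ : ∀ t, Integrable (Φ t) torusMeasure := fun t =>
    (hΦc.comp (Continuous.prodMk_right t)).integrable_of_hasCompactSupport
      (HasCompactSupport.of_compactSpace _)
  have hG0 : ∀ t, 0 ≤ G t := fun t => integral_nonneg (hΦ0 t)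
  have hAm : MeasurableSet {z : Fin 2 → UnitAddCircle | z 1 ∈ A} :=
    measurable_pi_apply 1 hA.measurableSet
  have hmeasA : (torusMeasure {z | z 1 ∈ A}).toReal = AddCircle.haarAddCircle.real A := by
    have h1 := (measurePreserving_eval
      (fun _ : Fin 2 => (AddCircle.haarAddCircle : Measure UnitAddCircle)) 1).measure_preimage
      hA.measurableSet.nullMeasurableSet
    exact congrArg ENNReal.toReal h1
  have hcorr : ∀ n : ℕ, n ≠ 0 →
      (torusMeasure (⋂ i, (skewShift α)^[a i * n] ⁻¹' {z | z 1 ∈ A})).toReal ≤ G (n ^ 2 • α) := by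
    intro n hn
    set D : Set (Fin 2 → UnitAddCircle) :=
      {z | ∀ i, z 1 + a i • z 0 + a i ^ 2 • (n ^ 2 • α) ∈ A} with hD
    have hDc : IsClosed D := by
      rw [hD, Set.ofPred_forall]
      exact isClosed_iInter fun i => hA.preimage (by fun_prop)
    have h1 : (⋂ i, (skewShift α)^[a i * n] ⁻¹' {z | z 1 ∈ A}) =
        (fun z : Fin 2 → UnitAddCircle => ![(2 * n) • z 0, z 1]) ⁻¹' D := by
      ext z
      simp only [Set.mem_iInter, Set.mem_preimage, hD, Set.mem_ofPred_eq, skewShift_iterate,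
        Matrix.cons_val_one, Matrix.cons_val_zero, smul_smul]
      refine forall_congr' fun i => ?_
      rw [mul_left_comm 2, mul_pow]
    rw [h1, (measurePreserving_diagonal_torus (by omega)).measure_preimage
      hDc.measurableSet.nullMeasurableSet]
    change torusMeasure.real D ≤ _
    rw [← integral_indicator_one hDc.measurableSet]
    refine integral_mono ((integrable_const (1 : ℝ)).indicator hDc.measurableSet)
      (hgiΦ _) fun z => ?_
    by_cases hz : z ∈ D
    · rw [Set.indicator_of_mem hz]
      refine le_of_eq (Finset.prod_eq_one fun i _ => ?_).symm
      exact hφ1 (hz i)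
    · rw [Set.indicator_of_notMem hz]
      exact hΦ0 _ _
  obtain ⟨S, hS, h⟩ := h
  have hkey : C * (AddCircle.haarAddCircle.real A) ^ ℓ ≤ ∫ t, G t ∂AddCircle.haarAddCircle := by
    refine le_of_forall_pos_le_add fun ε hε => ?_
    obtain ⟨l₀, hl₀⟩ := hS.equidistribution hα hGc (ε := ε / 3) (by positivity)
    obtain ⟨M, N, hMN, hL, hne, hlt⟩ := h (ε / 3) (by positivity) l₀
    have hN : M + (N - M) = N := by omega
    obtain ⟨h1, h2⟩ := hl₀ M (N - M) hL.le
    rw [hN] at h1 h2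
    set F := (Finset.Ico M N).filter (· ∈ S) with hF
    have hFS : S ∩ Set.Ico M N = (F : Set ℕ) := by
      ext n
      simp [hF, and_comm]
    have hFpos : (0 : ℝ) < F.card := by
      rw [hFS, Finset.coe_nonempty] at hne
      exact_mod_cast hne.card_pos
    rw [hFS, finsum_mem_coe_finset, Set.ncard_coe_finset, hmeasA, gt_iff_lt,
      lt_div_iff₀ hFpos] at hlt
    have h3 : ∑ n ∈ F, (torusMeasure (⋂ i, (skewShift α)^[a i * n] ⁻¹' {z | z 1 ∈ A})).toReal ≤
        1 + ∑ n ∈ F, G (n ^ 2 • α) := by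
      calc _ ≤ ∑ n ∈ F, ((if n = 0 then 1 else 0) + G (n ^ 2 • α)) := by
            refine Finset.sum_le_sum fun n _ => ?_
            by_cases hn : n = 0
            · rw [if_pos hn]
              refine le_add_of_le_of_nonneg ?_ (hG0 _)
              exact measureReal_le_one
            · rw [if_neg hn, zero_add]
              exact hcorr n hn
        _ ≤ _ := by
            rw [Finset.sum_add_distrib, Finset.sum_ite_eq']
            gcongr
            split_ifs <;> norm_num
    refine le_of_mul_le_mul_right (a := (F.card : ℝ)) ?_ hFpos
    nlinarith
  refine hkey.trans ?_
  have hBm : MeasurableSet {p : UnitAddCircle × (Fin 2 → UnitAddCircle) |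
      ∀ i, p.2 1 + a i • p.2 0 + a i ^ 2 • p.1 ∈ B} := by
    rw [Set.ofPred_forall]
    exact MeasurableSet.iInter fun i => (hB.preimage (by fun_prop)).measurableSet
  have hgiΦ2 : Integrable (Function.uncurry Φ) (AddCircle.haarAddCircle.prod torusMeasure) :=
    hΦc.integrable_of_hasCompactSupport (HasCompactSupport.of_compactSpace _)
  rw [← integral_indicator_one hBm, hG, integral_integral hgiΦ2]
  refine integral_mono hgiΦ2 ((integrable_const (1 : ℝ)).indicator hBm) fun p => ?_
  by_cases hp : ∀ i, p.2 1 + a i • p.2 0 + a i ^ 2 • p.1 ∈ B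
  · rw [Set.indicator_of_mem (by exact hp)]
    exact hΦ1 _ _
  · rw [Set.indicator_of_notMem (by exact hp)]
    push Not at hp
    obtain ⟨i, hi⟩ := hp
    exact le_of_eq (Finset.prod_eq_zero (Finset.mem_univ i) (hφ0 hi))

/-- Recurrence for the skew shift bounds from below the number of approximate configurations
in a separated finite family of points of the circle. -/
theorem BohrRecurrenceBound.le_card_mul {a : Fin 4 → ℕ} (ha : Function.Injective a) {C ℓ : ℝ}
    (hrec : ∀ (X : Type) (_ : MeasurableSpace X) (μ : Measure X),
      IsProbabilityMeasure μ → ∀ T : X → X, Ergodic T μ →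
      ∀ A : Set X, MeasurableSet A → 0 < μ A → BohrRecurrenceBound a C ℓ μ T A)
    {ι : Type*} (P : Finset ι) (hP : P.Nonempty) (x : ι → UnitAddCircle) {ρ : ℝ} (hρ : 0 < ρ)
    (hρ1 : 2 * ρ ≤ 1) (hsep : ∀ e ∈ P, ∀ e' ∈ P, e ≠ e' → 2 * ρ < ‖x e - x e'‖)
    (Q : Finset (Fin 4 → ι))
    (hQ : ∀ q : Fin 4 → ι, (∀ i, q i ∈ P) → ∀ s t u : UnitAddCircle,
      (∀ i, ‖u + a i • s + a i ^ 2 • t - x (q i)‖ < 2 * ρ) → q ∈ Q) :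
    C * (P.card * (2 * ρ)) ^ ℓ ≤ Q.card * (4 * ρ) ^ 3 := by
  obtain ⟨α, hα⟩ : ∃ α : UnitAddCircle, addOrderOf α = 0 := by
    refine ⟨((√2 : ℝ) : UnitAddCircle), addOrderOf_eq_zero_iff'.2 fun n hn h0 => ?_⟩
    rw [← AddCircle.coe_nsmul, AddCircle.coe_eq_zero_iff] at h0
    obtain ⟨k, hk⟩ := h0
    refine irrational_sqrt_two.ne_rat (k / n : ℚ) ?_
    have hn' : (n : ℝ) ≠ 0 := by exact_mod_cast hn.ne'
    push_cast
    rw [eq_div_iff hn']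
    simp at hk
    linarith
  set A : Set UnitAddCircle := ⋃ e ∈ P, Metric.closedBall (x e) ρ with hA
  set B : Set UnitAddCircle := ⋃ e ∈ P, Metric.ball (x e) (2 * ρ) with hB
  have hAc : IsClosed A := P.finite_toSet.isClosed_biUnion fun e _ => Metric.isClosed_closedBall
  have hBo : IsOpen B := isOpen_biUnion fun e _ => Metric.isOpen_ball
  have hAB : A ⊆ B := Set.iUnion₂_mono fun e _ => Metric.closedBall_subset_ball (by linarith)
  have hAmeas : (AddCircle.haarAddCircle : Measure UnitAddCircle).real A = P.card * (2 * ρ) := by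
    rw [haarAddCircle_eq_volume, hA, measureReal_biUnion_finset]
    · simp only [Measure.real, AddCircle.volume_closedBall, min_eq_right hρ1]
      rw [ENNReal.toReal_ofReal (by positivity), Finset.sum_const, nsmul_eq_mul]
    · intro e he e' he' hne
      refine Metric.closedBall_disjoint_closedBall ?_
      rw [dist_eq_norm]
      linarith [hsep e he e' he' hne]
    · exact fun e _ => Metric.isClosed_closedBall.measurableSet
  have hcard : (0 : ℝ) < P.card := by exact_mod_cast hP.card_pos
  have hpos : 0 < torusMeasure {z | z 1 ∈ A} := by
    have h1 := (measurePreserving_eval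
      (fun _ : Fin 2 => (AddCircle.haarAddCircle : Measure UnitAddCircle)) 1).measure_preimage
      hAc.measurableSet.nullMeasurableSet
    change 0 < torusMeasure (Function.eval 1 ⁻¹' A)
    rw [h1]
    refine ((measureReal_ne_zero_iff (measure_ne_top _ _)).1 ?_).bot_lt
    rw [hAmeas]
    positivity
  have hmain := BohrRecurrenceBound.le_measure_configurations hα hAc hBo hAB
    (hrec _ _ torusMeasure inferInstance _ (ergodic_skewShift hα) {z | z 1 ∈ A}
      (measurable_pi_apply 1 hAc.measurableSet) hpos)
  rw [hAmeas] at hmain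
  refine hmain.trans ?_
  let W : (Fin 4 → ι) → Set (UnitAddCircle × (Fin 2 → UnitAddCircle)) := fun q =>
    (fun p (i : Fin 3) => p.2 1 + a i.castSucc • p.2 0 + a i.castSucc ^ 2 • p.1) ⁻¹'
      (Set.univ.pi fun i => Metric.closedBall (x (q i.castSucc)) (2 * ρ))
  have hW : ∀ q, (AddCircle.haarAddCircle.prod torusMeasure).real (W q) ≤ (4 * ρ) ^ 3 := by
    intro q
    have hm : MeasurableSet (Set.univ.pi fun i : Fin 3 =>
        Metric.closedBall (x (q i.castSucc)) (2 * ρ)) :=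
      MeasurableSet.univ_pi fun i => Metric.isClosed_closedBall.measurableSet
    have h1 := (measurePreserving_vandermonde (b := fun i : Fin 3 => a i.castSucc)
      (ha.comp (Fin.castSucc_injective 3))).measure_preimage hm.nullMeasurableSet
    rw [Measure.real, h1, Measure.pi_pi, ENNReal.toReal_prod]
    calc _ ≤ ∏ _i : Fin 3, 4 * ρ := by
          refine Finset.prod_le_prod (fun _ _ => ENNReal.toReal_nonneg) fun i _ => ?_
          rw [haarAddCircle_eq_volume, AddCircle.volume_closedBall]
          refine ENNReal.toReal_le_of_le_ofReal (by positivity) (ENNReal.ofReal_le_ofReal ?_)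
          exact (min_le_right _ _).trans_eq (by ring)
      _ = (4 * ρ) ^ 3 := by simp
  have hsub : {p : UnitAddCircle × (Fin 2 → UnitAddCircle) |
      ∀ i, p.2 1 + a i • p.2 0 + a i ^ 2 • p.1 ∈ B} ⊆ ⋃ q ∈ Q, W q := by
    intro p hp
    simp only [hB, Set.mem_ofPred_eq, Set.mem_iUnion, exists_prop] at hp
    choose q hqP hq using hp
    refine Set.mem_iUnion₂.2 ⟨q, hQ q hqP (p.2 0) p.1 (p.2 1) fun i => ?_, ?_⟩
    · rw [← dist_eq_norm]
      exact hq i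
    · exact fun i _ => Metric.ball_subset_closedBall (hq i.castSucc)
  calc _ ≤ (AddCircle.haarAddCircle.prod torusMeasure).real (⋃ q ∈ Q, W q) :=
        measureReal_mono hsub (measure_ne_top _ _)
    _ ≤ ∑ q ∈ Q, (AddCircle.haarAddCircle.prod torusMeasure).real (W q) :=
        measureReal_biUnion_finset_le _ _
    _ ≤ ∑ _q ∈ Q, (4 * ρ) ^ 3 := Finset.sum_le_sum fun q _ => hW q
    _ = _ := by rw [Finset.sum_const, nsmul_eq_mul]

/-- The span of the constant, linear and quadratic vectors at four distinct points is the kernel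
of an integer linear form. -/
theorem exists_annihilator_span_pow {a : Fin 4 → ℕ} (ha : Function.Injective a) :
    ∃ c : Fin 4 → ℤ, c 3 ≠ 0 ∧ ∑ i, c i = 0 ∧ ∑ i, c i * (a i : ℤ) = 0 ∧
      ∑ i, c i * (a i : ℤ) ^ 2 = 0 ∧
      ∀ v : Fin 4 → ℚ, v ∈ Submodule.span ℚ
        (Set.range fun i : Fin 3 => fun j : Fin 4 => ((a j : ℚ) ^ (i : ℕ))) ↔
        ∑ i, (c i : ℚ) * v i = 0 := by
  have hne : ∀ {i j : Fin 4}, i ≠ j → ((a i : ℤ) - a j) ≠ 0 := fun hij =>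
    sub_ne_zero.2 (Nat.cast_injective.ne (ha.ne hij))
  have hneq : ∀ {i j : Fin 4}, i ≠ j → ((a i : ℚ) - a j) ≠ 0 := fun hij =>
    sub_ne_zero.2 (Nat.cast_injective.ne (ha.ne hij))
  refine ⟨![((a 3 : ℤ) - a 1) * (a 3 - a 2) * (a 1 - a 2),
    -(((a 3 : ℤ) - a 0) * (a 3 - a 2) * (a 0 - a 2)),
    ((a 3 : ℤ) - a 0) * (a 3 - a 1) * (a 0 - a 1),
    -(((a 0 : ℤ) - a 1) * (a 0 - a 2) * (a 1 - a 2))], ?_, ?_, ?_, ?_, fun v => ?_⟩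
  · exact neg_ne_zero.2 (mul_ne_zero (mul_ne_zero (hne (by decide)) (hne (by decide)))
      (hne (by decide)))
  · simp [Fin.sum_univ_four]; ring
  · simp [Fin.sum_univ_four]; ring
  · simp [Fin.sum_univ_four]; ring
  rw [Submodule.mem_span_range_iff_exists_fun]
  constructor
  · rintro ⟨w, rfl⟩
    simp [Fin.sum_univ_four, Fin.sum_univ_three]
    ring
  · intro hv
    simp [Fin.sum_univ_four] at hv
    have h10 : (a 1 : ℚ) - a 0 ≠ 0 := hneq (by decide)
    have h20 : (a 2 : ℚ) - a 0 ≠ 0 := hneq (by decide)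
    have h21 : (a 2 : ℚ) - a 1 ≠ 0 := hneq (by decide)
    obtain ⟨s, hs⟩ : ∃ s, v 1 = v 0 + s * (a 1 - a 0) :=
      ⟨(v 1 - v 0) / (a 1 - a 0), by field_simp; ring⟩
    obtain ⟨t, ht⟩ : ∃ t, v 2 = v 0 + s * (a 2 - a 0) + t * ((a 2 - a 0) * (a 2 - a 1)) :=
      ⟨(v 2 - v 0 - s * (a 2 - a 0)) / ((a 2 - a 0) * (a 2 - a 1)), by field_simp; ring⟩
    have h3 : v 3 = v 0 + s * (a 3 - a 0) + t * ((a 3 - a 0) * (a 3 - a 1)) := by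
      refine mul_left_cancel₀ (mul_ne_zero (mul_ne_zero h10 h20) h21) ?_
      rw [hs, ht] at hv
      linear_combination hv
    refine ⟨![v 0 - s * a 0 + t * (a 0 * a 1), s - t * (a 0 + a 1), t], ?_⟩
    ext i
    fin_cases i
    · simp [Fin.sum_univ_three]; ring
    · simp [Fin.sum_univ_three]; rw [hs]; ring
    · simp [Fin.sum_univ_three]; rw [ht]; ring
    · simp [Fin.sum_univ_three]; rw [h3]; ring

theorem eq_zero_of_pow_dvd_sum_mul_pow {B m : ℕ} {f : Fin m → ℤ} (hf : ∀ j, |f j| < B)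
    (h : (B : ℤ) ^ m ∣ ∑ j, f j * (B : ℤ) ^ (j : ℕ)) : ∀ j, f j = 0 := by
  induction m with
  | zero => exact fun j => j.elim0
  | succ m ih =>
    have hB : (B : ℤ) ≠ 0 := ((abs_nonneg _).trans_lt (hf 0)).ne'
    have hsum : ∑ j, f j * (B : ℤ) ^ (j : ℕ) =
        f 0 + B * ∑ j : Fin m, f j.succ * (B : ℤ) ^ (j : ℕ) := by
      rw [Fin.sum_univ_succ, Finset.mul_sum]
      simp only [Fin.val_zero, pow_zero, mul_one, Fin.val_succ, pow_succ]
      congr 1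
      exact Finset.sum_congr rfl fun j _ => by ring
    rw [hsum, pow_succ'] at h
    have h0 : f 0 = 0 := by
      refine Int.eq_zero_of_abs_lt_dvd (m := B) ?_ (hf 0)
      exact (Int.dvd_add_left (dvd_mul_right _ _)).1 (dvd_of_mul_right_dvd h)
    rw [h0, zero_add] at h
    exact Fin.cases h0 (ih (fun j => hf j.succ) ((mul_dvd_mul_iff_left hB).1 h))

theorem UnitAddCircle.dvd_of_norm_lt {M : ℕ} (hM : 0 < M) {z : ℤ}
    (h : ‖((z / M : ℝ) : UnitAddCircle)‖ < 1 / M) : (M : ℤ) ∣ z := by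
  have hM' : (0 : ℝ) < M := by exact_mod_cast hM
  rw [UnitAddCircle.norm_eq, lt_div_iff₀ hM', ← abs_of_pos hM', ← abs_mul, abs_of_pos hM',
    sub_mul, div_mul_cancel₀ _ hM'.ne'] at h
  have h1 : |z - round (z / M : ℝ) * (M : ℤ)| < 1 := by exact_mod_cast h
  exact ⟨round (z / M : ℝ), by rw [Int.abs_lt_one_iff] at h1; linarith⟩

/-- The point of the circle with base `B` digits `e`, the most significant ones last. -/
noncomputable def digitPoint (B : ℕ) {m : ℕ} (e : Fin m → ℕ) : UnitAddCircle :=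
  (((∑ j, e j * B ^ (j : ℕ) : ℕ) / (B ^ m : ℕ) : ℝ) : UnitAddCircle)

theorem sum_eq_zero_of_norm_digitPoint_lt {ι : Type*} [Fintype ι] {B m : ℕ} (hB : 0 < B)
    (c : ι → ℤ) (q : ι → Fin m → ℕ) (hc : ∀ j, |∑ i, c i * (q i j : ℤ)| < B)
    (h : ‖∑ i, c i • digitPoint B (q i)‖ < 1 / (B ^ m : ℕ)) (j : Fin m) :
    ∑ i, c i * (q i j : ℤ) = 0 := by
  have hsum : ∑ i, c i • digitPoint B (q i) =
      (((∑ j, (∑ i, c i * (q i j : ℤ)) * (B : ℤ) ^ (j : ℕ) : ℤ) / (B ^ m : ℕ) : ℝ) :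
        UnitAddCircle) := by
    simp only [digitPoint, ← AddCircle.coe_zsmul]
    rw [← QuotientAddGroup.mk_sum]
    congr 1
    push_cast
    simp only [zsmul_eq_mul, ← mul_div_assoc]
    rw [← Finset.sum_div]
    congr 1
    simp only [Finset.mul_sum, Finset.sum_mul, mul_assoc]
    exact Finset.sum_comm
  rw [hsum] at h
  refine eq_zero_of_pow_dvd_sum_mul_pow hc ?_ j
  exact_mod_cast UnitAddCircle.dvd_of_norm_lt (pow_pos hB m) h

theorem lt_norm_digitPoint_sub {B m : ℕ} {e e' : Fin m → ℕ} (he : ∀ j, e j < B)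
    (he' : ∀ j, e' j < B) (hne : e ≠ e') :
    1 / (B ^ m : ℕ) ≤ ‖digitPoint B e - digitPoint B e'‖ := by
  by_contra! h
  obtain ⟨j, hj⟩ := Function.ne_iff.1 hne
  refine hj ?_
  have := sum_eq_zero_of_norm_digitPoint_lt ((Nat.zero_le _).trans_lt (he j)) ![1, -1] ![e, e']
    (fun j => ?_) (by simpa [sub_eq_add_neg] using h) j
  · simp at this
    omega
  · have h1 := he j
    have h2 := he' j
    simp
    rw [abs_lt]
    constructor <;> omega

theorem BohrRecurrenceBound.le_ncard_mul {a : Fin 4 → ℕ} (ha : Function.Injective a) {C ℓ : ℝ}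
    (hrec : ∀ (X : Type) (_ : MeasurableSpace X) (μ : Measure X),
      IsProbabilityMeasure μ → ∀ T : X → X, Ergodic T μ →
      ∀ A : Set X, MeasurableSet A → 0 < μ A → BohrRecurrenceBound a C ℓ μ T A)
    {c : Fin 4 → ℤ} (hc0 : ∑ i, c i = 0) (hc1 : ∑ i, c i * (a i : ℤ) = 0)
    (hc2 : ∑ i, c i * (a i : ℤ) ^ 2 = 0) {V : Submodule ℚ (Fin 4 → ℚ)}
    (hV : ∀ v : Fin 4 → ℚ, ∑ i, (c i : ℚ) * v i = 0 → v ∈ V) {K : ℕ}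
    (hK : ∑ i, |c i| < K) {m N : ℕ} (hN : 0 < N) {E : Set (Fin m → ℕ)} (hE : E.Nonempty)
    (hEN : ∀ x ∈ E, ∀ j, x j < N) :
    C * (E.ncard / (2 * K * (K * N) ^ m)) ^ ℓ ≤
      (Set.ncard {q : Fin 4 → Fin m → ℕ | (∀ i, q i ∈ E) ∧ inVm V q}) /
        ((K : ℝ) * (K * N) ^ m) ^ 3 := by
  classical
  have hK0 : 0 < K := by
    have : (0 : ℤ) ≤ ∑ i, |c i| := Finset.sum_nonneg fun i _ => abs_nonneg _
    omega
  have hfin : E.Finite :=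
    (Fintype.piFinset fun _ : Fin m => Finset.range N).finite_toSet.subset fun x hx => by
      simpa using hEN x hx
  have hfinQ : {q : Fin 4 → Fin m → ℕ | (∀ i, q i ∈ E) ∧ inVm V q}.Finite :=
    (Set.Finite.pi' fun _ => hfin).subset fun q hq => hq.1
  set M : ℕ := (K * N) ^ m with hM
  have hKN : 0 < K * N := by positivity
  have hM0 : (0 : ℝ) < M := by positivity
  have hKR : (1 : ℝ) ≤ K := by exact_mod_cast hK0
  have hMR : (1 : ℝ) ≤ M := by exact_mod_cast Nat.one_le_iff_ne_zero.2 (by positivity)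
  set ρ : ℝ := 1 / (4 * K * M) with hρ
  have h2ρ : 2 * ρ = 1 / (2 * K * M) := by rw [hρ]; field_simp; norm_num
  have h4ρ : 4 * ρ = 1 / (K * M) := by rw [hρ]; field_simp
  have hKρ : K * (2 * ρ) < 1 / M := by
    rw [h2ρ]
    field_simp
    norm_num
  have hρM : 2 * ρ < 1 / M := lt_of_le_of_lt (le_mul_of_one_le_left (by positivity) hKR) hKρ
  have hmain := BohrRecurrenceBound.le_card_mul ha hrec hfin.toFinset
    (hfin.toFinset_nonempty.2 hE) (digitPoint (K * N)) (ρ := ρ) (by positivity)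
    (hρM.le.trans ((div_le_one hM0).2 hMR)) ?_ hfinQ.toFinset ?_
  · rw [← Set.ncard_eq_toFinset_card _ hfin, ← Set.ncard_eq_toFinset_card _ hfinQ, h2ρ,
      h4ρ] at hmain
    rw [hM] at hmain
    push_cast at hmain
    rw [one_div_pow, mul_one_div, mul_one_div] at hmain
    exact hmain
  · intro e he e' he' hne
    rw [hfin.mem_toFinset] at he he'
    have hle : N ≤ K * N := Nat.le_mul_of_pos_left _ hK0
    exact hρM.trans_le (lt_norm_digitPoint_sub (fun j => (hEN e he j).trans_le hle)
      (fun j => (hEN e' he' j).trans_le hle) hne)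
  · intro q hq s t u hqx
    simp only [hfin.mem_toFinset] at hq
    rw [hfinQ.mem_toFinset]
    refine ⟨hq, fun j => hV _ ?_⟩
    have hcast : ∑ i, c i * (q i j : ℤ) = 0 := by
      refine sum_eq_zero_of_norm_digitPoint_lt hKN c q (fun j => ?_) ?_ j
      · calc |∑ i, c i * (q i j : ℤ)| ≤ ∑ i, |c i| * N := by
              refine (Finset.abs_sum_le_sum_abs _ _).trans (Finset.sum_le_sum fun i _ => ?_)
              rw [abs_mul, Nat.abs_cast]
              exact mul_le_mul_of_nonneg_left (by exact_mod_cast (hEN _ (hq i) j).le)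
                (abs_nonneg _)
          _ < (K * N : ℕ) := by
              rw [← Finset.sum_mul]
              push_cast
              exact mul_lt_mul_of_pos_right hK (by exact_mod_cast hN)
      · have hzero : ∑ i, c i • (u + a i • s + a i ^ 2 • t) = 0 := by
          have : ∑ i, c i • (u + a i • s + a i ^ 2 • t) =
              (∑ i, c i) • u + (∑ i, c i * (a i : ℤ)) • s + (∑ i, c i * (a i : ℤ) ^ 2) • t := by
            rw [Finset.sum_smul, Finset.sum_smul, Finset.sum_smul, ← Finset.sum_add_distrib,
              ← Finset.sum_add_distrib]
            refine Finset.sum_congr rfl fun i _ => ?_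
            rw [smul_add, smul_add, mul_smul, mul_smul, natCast_zsmul, ← Nat.cast_pow,
              natCast_zsmul]
          rw [this, hc0, hc1, hc2, zero_smul, zero_smul, zero_smul, add_zero, add_zero]
        have heq : ∑ i, c i • digitPoint (K * N) (q i) =
            -∑ i, c i • (u + a i • s + a i ^ 2 • t - digitPoint (K * N) (q i)) := by
          simp only [smul_sub, Finset.sum_sub_distrib]
          rw [hzero, zero_sub, neg_neg]
        rw [heq, norm_neg]
        calc _ ≤ ∑ i, (|c i| : ℤ) * (2 * ρ) := by
              refine (norm_sum_le _ _).trans (Finset.sum_le_sum fun i _ => ?_)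
              refine (norm_zsmul_le _ _).trans ?_
              rw [Int.norm_eq_abs, Int.cast_abs]
              exact mul_le_mul_of_nonneg_left (hqx i).le (abs_nonneg _)
          _ ≤ K * (2 * ρ) := by
              rw [← Finset.sum_mul]
              refine mul_le_mul_of_nonneg_right ?_ (by positivity)
              exact_mod_cast hK.le
          _ < _ := hKρ
    exact_mod_cast hcast

theorem finite_setOf_forall_lt_inVm {d m N : ℕ} (V : Submodule ℚ (Fin d → ℚ)) :
    {q : Fin d → Fin m → ℕ | (∀ i j, q i j < N) ∧ inVm V q}.Finite :=
  (Fintype.piFinset fun _ : Fin d => Fintype.piFinset fun _ : Fin m =>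
    Finset.range N).finite_toSet.subset fun q hq => by simpa using hq.1

theorem ncard_inVm_pos {d m N : ℕ} (V : Submodule ℚ (Fin d → ℚ)) (hN : 0 < N) :
    0 < {q : Fin d → Fin m → ℕ | (∀ i j, q i j < N) ∧ inVm V q}.ncard := by
  refine (Set.ncard_pos (finite_setOf_forall_lt_inVm V)).2 ⟨0, fun _ _ => hN, fun _ => ?_⟩
  convert V.zero_mem
  simp

theorem ncard_inVm_le {m N : ℕ} {V : Submodule ℚ (Fin 4 → ℚ)} {c : Fin 4 → ℤ} (hc : c 3 ≠ 0)
    (hV : ∀ v ∈ V, ∑ i, (c i : ℚ) * v i = 0) :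
    {q : Fin 4 → Fin m → ℕ | (∀ i j, q i j < N) ∧ inVm V q}.ncard ≤ (N ^ m) ^ 3 := by
  classical
  set R : Finset (Fin 3 → Fin m → ℕ) := Fintype.piFinset fun _ => Fintype.piFinset fun _ =>
    Finset.range N with hR
  have hcard : R.card = (N ^ m) ^ 3 := by simp [hR]
  rw [← hcard, ← Set.ncard_coe_finset]
  refine Set.ncard_le_ncard_of_injOn (fun q i => q i.castSucc) ?_ ?_ R.finite_toSet
  · intro q hq
    simp only [hR, Finset.mem_coe, Fintype.mem_piFinset, Finset.mem_range]
    exact fun i j => hq.1 _ j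
  · intro q hq q' hq' heq
    have h3 : ∀ i : Fin 3, q i.castSucc = q' i.castSucc := fun i => congrFun heq i
    funext i j
    refine Fin.lastCases ?_ (fun i => by rw [h3 i]) i
    have e1 := hV _ (hq.2 j)
    have e2 := hV _ (hq'.2 j)
    rw [Fin.sum_univ_castSucc] at e1 e2
    simp only [h3] at e1
    have hc' : (c (Fin.last 3) : ℚ) ≠ 0 := by exact_mod_cast hc
    have e3 := mul_left_cancel₀ hc' (add_left_cancel (e1.trans e2.symm))
    exact_mod_cast e3

theorem BohrRecurrenceBound.const_le_one {a : Fin 4 → ℕ} {C ℓ : ℝ}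
    (hrec : ∀ (X : Type) (_ : MeasurableSpace X) (μ : Measure X),
      IsProbabilityMeasure μ → ∀ T : X → X, Ergodic T μ →
      ∀ A : Set X, MeasurableSet A → 0 < μ A → BohrRecurrenceBound a C ℓ μ T A) : C ≤ 1 := by
  have herg : Ergodic (id : Unit → Unit) (Measure.dirac ()) :=
    { MeasurePreserving.id _ with
      aeconst_set := fun s _ _ => by
        rcases Set.eq_empty_or_nonempty s with rfl | hs
        · exact Filter.eventuallyConst_set.2 (Or.inr (by simp))
        · rw [Subsingleton.eq_univ_of_nonempty hs]
          exact Filter.eventuallyConst_set.2 (Or.inl (by simp)) }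
  exact (hrec Unit _ (Measure.dirac ()) inferInstance id herg Set.univ MeasurableSet.univ
    (by simp)).le_one

theorem optimal_recurrence_implies_abundance
    (a : Fin 4 → ℕ) (ha : Function.Injective a)
    (V : Submodule ℚ (Fin 4 → ℚ))
    (hV : V = Submodule.span ℚ
      (Set.range fun i : Fin 3 => fun j : Fin 4 => ((a j : ℚ) ^ (i : ℕ))))
    (C ℓ : ℝ) (hC : 0 < C) (hℓ : 4 ≤ ℓ)
    (hyp : ∀ (X : Type) (_ : MeasurableSpace X) (μ : Measure X),
      IsProbabilityMeasure μ → ∀ T : X → X, Ergodic T μ →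
      ∀ A : Set X, MeasurableSet A → 0 < μ A →
      ∃ S : Set ℕ, IsFiniteRankBohr0 S ∧
        ∀ ε : ℝ, 0 < ε → ∀ L : ℕ, ∃ M N : ℕ, M < N ∧ N - M > L ∧
          (S ∩ Set.Ico M N).Nonempty ∧
          (∑ᶠ n ∈ S ∩ Set.Ico M N, (μ (⋂ i : Fin 4, T^[a i * n] ⁻¹' A)).toReal) /
              ((S ∩ Set.Ico M N).ncard : ℝ)
            > C * (μ A).toReal ^ ℓ - ε) :
    ∃ β : ℝ, 0 < β ∧ ∀ m : ℕ, ∃ N₀ : ℕ, ∀ N ≥ N₀, ∀ E : Set (Fin m → ℕ),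
      (∀ x ∈ E, ∀ j, x j < N) →
      Dmn V m N E ≥ C * β ^ m * dmn m N E ^ ℓ := by
  have hrec : ∀ (X : Type) (_ : MeasurableSpace X) (μ : Measure X),
      IsProbabilityMeasure μ → ∀ T : X → X, Ergodic T μ →
      ∀ A : Set X, MeasurableSet A → 0 < μ A → BohrRecurrenceBound a C ℓ μ T A := hyp
  obtain ⟨c, hc3, hc0, hc1, hc2, hcV⟩ := exists_annihilator_span_pow ha
  rw [← hV] at hcV
  obtain ⟨K, hK⟩ : ∃ K : ℕ, ∑ i, |c i| < K :=
    ⟨(∑ i, |c i|).toNat + 1, by have := Int.self_le_toNat (∑ i, |c i|); omega⟩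
  have hK0 : 0 < K := by
    have : (0 : ℤ) ≤ ∑ i, |c i| := Finset.sum_nonneg fun i _ => abs_nonneg _
    omega
  have hKR : (1 : ℝ) ≤ K := by exact_mod_cast hK0
  refine ⟨(1 / (2 * K * K)) ^ ℓ, by positivity, fun m => ⟨1, fun N hN E hE => ?_⟩⟩
  have hNR : (0 : ℝ) < N := by exact_mod_cast hN
  have hd0 : 0 ≤ dmn m N E := by unfold dmn; positivity
  rw [ge_iff_le]
  rcases E.eq_empty_or_nonempty with rfl | hne
  · have h0 : dmn m N (∅ : Set (Fin m → ℕ)) = 0 := by simp [dmn]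
    rw [h0, Real.zero_rpow (by linarith), mul_zero]
    unfold Dmn
    positivity
  have hpos := ncard_inVm_pos (m := m) V hN
  rcases Nat.eq_zero_or_pos m with rfl | hm
  · have hEu : E = Set.univ := Subsingleton.eq_univ_of_nonempty hne
    have hd : dmn 0 N E = 1 := by simp [dmn, hEu]
    have hD : Dmn V 0 N E = 1 := by
      have hset : {q : Fin 4 → Fin 0 → ℕ | (∀ i, q i ∈ E) ∧ inVm V q} =
          {q : Fin 4 → Fin 0 → ℕ | (∀ i j, q i j < N) ∧ inVm V q} := by
        ext q
        simp [hEu]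
      rw [Dmn, hset]
      exact div_self (by exact_mod_cast hpos.ne')
    rw [hd, hD, Real.one_rpow, pow_zero, mul_one, mul_one]
    exact BohrRecurrenceBound.const_le_one hrec
  have hmain := BohrRecurrenceBound.le_ncard_mul ha hrec hc0 hc1 hc2 (fun v => (hcV v).2) hK
    (m := m) hN hne hE
  have hden : (({q : Fin 4 → Fin m → ℕ | (∀ i j, q i j < N) ∧ inVm V q}.ncard : ℕ) : ℝ) ≤
      ((N : ℝ) ^ m) ^ 3 := by
    exact_mod_cast ncard_inVm_le (m := m) (N := N) hc3 fun v => (hcV v).1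
  set Q : ℝ := (Set.ncard {q : Fin 4 → Fin m → ℕ | (∀ i, q i ∈ E) ∧ inVm V q} : ℝ) with hQ
  have hQ0 : 0 ≤ Q := Nat.cast_nonneg _
  have hDm : Q / ((N : ℝ) ^ m) ^ 3 ≤ Dmn V m N E :=
    div_le_div_of_nonneg_left hQ0 (by exact_mod_cast hpos) hden
  refine le_trans ?_ (le_trans hmain (le_trans ?_ hDm))
  · rw [← Real.rpow_natCast, ← Real.rpow_mul (by positivity), mul_comm ℓ,
      Real.rpow_mul (by positivity), Real.rpow_natCast, mul_assoc,
      ← Real.mul_rpow (by positivity) hd0]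
    refine mul_le_mul_of_nonneg_left (Real.rpow_le_rpow (by positivity) ?_ (by linarith)) hC.le
    have h2 : (2 : ℝ) * K ≤ (2 * K) ^ m := le_self_pow₀ (by linarith) hm.ne'
    calc (1 / (2 * K * K : ℝ)) ^ m * dmn m N E
        = E.ncard / ((2 * K) ^ m * (K * N) ^ m) := by
          rw [dmn, div_pow, one_pow, div_mul_div_comm, one_mul, mul_pow (2 * K : ℝ) K,
            mul_pow (K : ℝ) N, mul_assoc]
      _ ≤ _ := by gcongr
  · refine div_le_div_of_nonneg_left hQ0 (by positivity) (pow_le_pow_left₀ (by positivity) ?_ 3)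
    rw [mul_pow, ← mul_assoc]
    exact le_mul_of_one_le_left (by positivity)
      (one_le_mul_of_one_le_of_one_le hKR (one_le_pow₀ hKR))
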